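/- For every integer n ≥ 3, the triply-refined ASM generating function satisfies: (z2−z1)(z3−1)·Ztri_n(x,y;z1,z2,z3)·Z_{n−2}(x,y) = ((z2−1)(z3−1)−y·z2·z3)·z1·Zadj_{n−1}(x,y;z1,z3)·Z_{n−1}(x,y;z2) − (x(z1−1)(z3−1)−y)·z1·z2·z3·Zbaradj_{n−1}(x,y;z2,z3)·Z_{n−1}(x,y;z1) − (z1−1)(z3−1)·z2·Z_{n−1}(x,y;z2)·Z_{n−2}(x,y) + (z2−1)(z3−1)·z1·(x·z2·z3)^{n−1}·Z_{n−1}(x,y;z1)·Z_{n−2}(x,y), as an identity of polynomials in ℤ[x,y,z1,z2,z3]. -/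

import Mathlib

open Finset

/-- The `n × n` integer matrix encoded by `e`, with entries in `{-1, 0, 1}`. -/
def asmMat {n : ℕ} (e : Fin n → Fin n → Fin 3) : Fin n → Fin n → ℤ :=
  fun i j => (e i j : ℤ) - 1

/-- `A` is an alternating sign matrix: all entries lie in `{-1, 0, 1}`, every
partial row sum and every partial column sum is `0` or `1` (equivalently, the
nonzero entries of each row and of each column alternate in sign), and every
complete row sum and column sum is `1`. -/
def IsASM {n : ℕ} (A : Fin n → Fin n → ℤ) : Prop :=
  (∀ i j, A i j = -1 ∨ A i j = 0 ∨ A i j = 1) ∧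
  (∀ (i j : Fin n), (∑ j' ∈ univ.filter (fun j' : Fin n => j' ≤ j), A i j') = 0 ∨
    (∑ j' ∈ univ.filter (fun j' : Fin n => j' ≤ j), A i j') = 1) ∧
  (∀ (i j : Fin n), (∑ i' ∈ univ.filter (fun i' : Fin n => i' ≤ i), A i' j) = 0 ∨
    (∑ i' ∈ univ.filter (fun i' : Fin n => i' ≤ i), A i' j) = 1) ∧
  (∀ i : Fin n, (∑ j, A i j) = 1) ∧
  (∀ j : Fin n, (∑ i, A i j) = 1)

/-- `ν(A)`, the number of generalized inversions of `A`. -/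
def nuASM {n : ℕ} (A : Fin n → Fin n → ℤ) : ℕ :=
  (∑ i : Fin n, ∑ i' : Fin n, ∑ j : Fin n, ∑ j' : Fin n,
      if i < i' ∧ j' ≤ j then A i j * A i' j' else 0).toNat

/-- `μ(A)`, the number of entries of `A` equal to `-1`. -/
def muASM {n : ℕ} (A : Fin n → Fin n → ℤ) : ℕ :=
  (univ.filter (fun p : Fin n × Fin n => A p.1 p.2 = -1)).card

/-- `ρT(A)`, the number of `0`'s to the left of the `1` in the top row of `A`. -/
def rhoT {n : ℕ} (A : Fin n → Fin n → ℤ) : ℕ :=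
  (univ.filter (fun j : Fin n =>
    A ⟨0, j.pos⟩ j = 0 ∧ ∃ j' : Fin n, j < j' ∧ A ⟨0, j.pos⟩ j' = 1)).card

/-- `ρR(A)`, the number of `0`'s below the `1` in the right-most column of `A`. -/
def rhoR {n : ℕ} (A : Fin n → Fin n → ℤ) : ℕ :=
  (univ.filter (fun i : Fin n =>
    A i ⟨n - 1, Nat.sub_lt i.pos Nat.one_pos⟩ = 0 ∧
      ∃ i' : Fin n, i' < i ∧ A i' ⟨n - 1, Nat.sub_lt i.pos Nat.one_pos⟩ = 1)).card

/-- `ρB(A)`, the number of `0`'s to the right of the `1` in the bottom row of `A`. -/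
def rhoB {n : ℕ} (A : Fin n → Fin n → ℤ) : ℕ :=
  (univ.filter (fun j : Fin n =>
    A ⟨n - 1, Nat.sub_lt j.pos Nat.one_pos⟩ j = 0 ∧
      ∃ j' : Fin n, j' < j ∧ A ⟨n - 1, Nat.sub_lt j.pos Nat.one_pos⟩ j' = 1)).card

/-- `ρL(A)`, the number of `0`'s above the `1` in the left-most column of `A`. -/
def rhoL {n : ℕ} (A : Fin n → Fin n → ℤ) : ℕ :=
  (univ.filter (fun i : Fin n =>
    A i ⟨0, i.pos⟩ = 0 ∧ ∃ i' : Fin n, i < i' ∧ A i' ⟨0, i.pos⟩ = 1)).card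

open Classical in
/-- The quadruply-refined ASM generating function
`Zqua_n(x,y;z1,z2,z3,z4) = Σ_A x^{ν(A)} y^{μ(A)} z1^{ρT(A)} z2^{ρR(A)} z3^{ρB(A)} z4^{ρL(A)}`. -/
noncomputable def Zqua (n : ℕ) {R : Type*} [CommRing R] (x y z1 z2 z3 z4 : R) : R :=
  ∑ e : Fin n → Fin n → Fin 3,
    if IsASM (asmMat e) then
      x ^ nuASM (asmMat e) * y ^ muASM (asmMat e) * z1 ^ rhoT (asmMat e) *
        z2 ^ rhoR (asmMat e) * z3 ^ rhoB (asmMat e) * z4 ^ rhoL (asmMat e)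
    else 0

/-- Adjacent-boundary doubly-refined generating function `Zadj_n(x,y;z1,z2)`. -/
noncomputable def Zadj (n : ℕ) {R : Type*} [CommRing R] (x y z1 z2 : R) : R :=
  Zqua n x y z1 1 1 z2

/-- Alternative adjacent-boundary doubly-refined generating function `Zbaradj_n(x,y;z1,z2)`. -/
noncomputable def Zbaradj (n : ℕ) {R : Type*} [CommRing R] (x y z1 z2 : R) : R :=
  Zqua n x y z1 z2 1 1

/-- Triply-refined generating function `Ztri_n(x,y;z1,z2,z3)`. -/
noncomputable def Ztri (n : ℕ) {R : Type*} [CommRing R] (x y z1 z2 z3 : R) : R :=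
  Zqua n x y z1 1 z2 z3

/-- Opposite-boundary doubly-refined generating function `Zopp_n(x,y;z1,z2)`. -/
noncomputable def Zopp (n : ℕ) {R : Type*} [CommRing R] (x y z1 z2 : R) : R :=
  Zqua n x y z1 1 z2 1

/-- Singly-refined generating function `Z_n(x,y;z)`. -/
noncomputable def Zsing (n : ℕ) {R : Type*} [CommRing R] (x y z : R) : R :=
  Zqua n x y z 1 1 1

/-- Unrefined generating function `Z_n(x,y)`.  Note `Zun 0 x y = 1`. -/
noncomputable def Zun (n : ℕ) {R : Type*} [CommRing R] (x y : R) : R :=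
  Zqua n x y 1 1 1 1

theorem prod_ofFn_apply {ι R : Type*} [Fintype ι] [DecidableEq ι] [CommRing R] {n : ℕ}
    (M : Fin n → Matrix ι ι R) (a b : ι) :
    (List.ofFn M).prod a b = ∑ p : Fin (n + 1) → ι,
      if p 0 = a ∧ p (Fin.last n) = b then ∏ j, M j (p j.castSucc) (p j.succ) else 0 := by
  induction n generalizing a with
  | zero =>
    rw [← (Equiv.funUnique (Fin 1) ι).symm.sum_comp]
    simp only [List.ofFn_zero, List.prod_nil, Matrix.one_apply]
    rw [Finset.sum_eq_single a]
    · simp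
    · intro c _ hc
      simp [hc]
    · simp
  | succ n ih =>
    rw [List.ofFn_succ, List.prod_cons, Matrix.mul_apply,
      ← (Fin.consEquiv (fun _ => ι)).sum_comp, Fintype.sum_prod_type]
    trans ∑ p : Fin (n + 1) → ι, M 0 a (p 0) *
      if p (Fin.last n) = b then ∏ j : Fin n, M j.succ (p j.castSucc) (p j.succ) else 0
    · simp only [ih, Finset.mul_sum]
      rw [Finset.sum_comm]
      refine Finset.sum_congr rfl fun p _ => ?_
      rw [Finset.sum_eq_single (p 0)]
      · simp
      · intro c _ hc
        simp [hc.symm]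
      · simp
    · rw [Finset.sum_eq_single a]
      · simp [Fin.consEquiv, Fin.prod_univ_succ, ← Fin.succ_last]
      · intro c _ hc
        refine Finset.sum_eq_zero fun p _ => ?_
        simp [Fin.consEquiv, hc]
      · simp

/-- Domain wall boundary conditions for horizontal edges `h` and vertical edges `v`. -/
def IsDomainWall {n : ℕ} (h : Fin n → Fin (n + 1) → Bool) (v : Fin (n + 1) → Fin n → Bool) :
    Prop :=
  (∀ i, h i 0 = false) ∧ (∀ i, h i (Fin.last n) = true) ∧
    (∀ j, v 0 j = false) ∧ ∀ j, v (Fin.last n) j = true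

instance {n : ℕ} (h : Fin n → Fin (n + 1) → Bool) (v : Fin (n + 1) → Fin n → Bool) :
    Decidable (IsDomainWall h v) := by unfold IsDomainWall; infer_instance

/-- The product of the vertex weights of a configuration. -/
def configWeight {R : Type*} [CommRing R] {n : ℕ} (ω : Fin n → Fin n → Bool → Bool → Bool → Bool → R)
    (h : Fin n → Fin (n + 1) → Bool) (v : Fin (n + 1) → Fin n → Bool) : R :=
  ∏ i, ∏ j, ω i j (h i j.castSucc) (v i.castSucc j) (h i j.succ) (v i.succ j)

/-- The sum of the weights of all configurations with domain wall boundary conditions. -/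
def latticeSum {R : Type*} [CommRing R] {n : ℕ}
    (ω : Fin n → Fin n → Bool → Bool → Bool → Bool → R) : R :=
  ∑ h : Fin n → Fin (n + 1) → Bool, ∑ v : Fin (n + 1) → Fin n → Bool,
    if IsDomainWall h v then configWeight ω h v else 0

/-- The transfer matrix of a single row of vertices. -/
def rowTransfer {R : Type*} [CommRing R] {n : ℕ} (ω : Fin n → Bool → Bool → Bool → Bool → R) :
    Matrix (Fin n → Bool) (Fin n → Bool) R :=
  Matrix.of fun s s' =>
    (List.ofFn fun j => (Matrix.of fun l r => ω j l (s j) r (s' j) : Matrix Bool Bool R)).prod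
      false true

theorem latticeSum_eq_prod_rowTransfer {R : Type*} [CommRing R] {n : ℕ}
    (ω : Fin n → Fin n → Bool → Bool → Bool → Bool → R) :
    latticeSum ω = (List.ofFn fun i => rowTransfer (ω i)).prod (fun _ => false) (fun _ => true) := by
  rw [prod_ofFn_apply, latticeSum, Finset.sum_comm]
  refine Finset.sum_congr rfl fun v _ => ?_
  simp only [rowTransfer, Matrix.of_apply, prod_ofFn_apply]
  rw [Finset.prod_univ_sum, Fintype.piFinset_univ]
  by_cases hv : v 0 = (fun _ => false) ∧ v (Fin.last n) = fun _ => true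
  · rw [if_pos hv]
    refine Finset.sum_congr rfl fun h _ => ?_
    by_cases hh : ∀ i, h i 0 = false ∧ h i (Fin.last n) = true
    · rw [if_pos ⟨fun i => (hh i).1, fun i => (hh i).2, by simp [hv.1], by simp [hv.2]⟩]
      exact (Finset.prod_congr rfl fun i _ => if_pos (hh i)).symm
    · obtain ⟨i, hi⟩ := not_forall.1 hh
      rw [if_neg fun hw => hi ⟨hw.1 i, hw.2.1 i⟩]
      exact (Finset.prod_eq_zero (Finset.mem_univ i) (if_neg hi)).symm
  · rw [if_neg hv]
    refine Finset.sum_eq_zero fun h _ => if_neg fun hw => hv ⟨funext hw.2.2.1, funext hw.2.2.2⟩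

theorem sum_comp_flip {α β γ M : Type*} [Fintype α] [Fintype β] [Fintype γ] [DecidableEq α]
    [DecidableEq β] [AddCommMonoid M] (f : (α → β → γ) → M) :
    ∑ h : α → β → γ, f h = ∑ h : β → α → γ, f (fun a b => h b a) :=
  ((Equiv.piComm (fun (_ : β) (_ : α) => γ)).sum_comp f).symm

theorem latticeSum_transpose {R : Type*} [CommRing R] {n : ℕ}
    (ω : Fin n → Fin n → Bool → Bool → Bool → Bool → R) :
    latticeSum ω = latticeSum (fun i j l u r d => ω j i u l d r) := by
  rw [latticeSum, latticeSum, Finset.sum_comm, sum_comp_flip]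
  refine Finset.sum_congr rfl fun h _ => ?_
  rw [sum_comp_flip]
  refine Finset.sum_congr rfl fun v _ => ?_
  refine if_congr ?_ ?_ rfl
  · simp only [IsDomainWall]; tauto
  · rw [configWeight, Finset.prod_comm]; rfl

theorem latticeSum_reflect {R : Type*} [CommRing R] {n : ℕ}
    (ω : Fin n → Fin n → Bool → Bool → Bool → Bool → R) :
    latticeSum ω = latticeSum (fun i j l u r d => ω i.rev j l (!d) r (!u)) := by
  rw [latticeSum, latticeSum,
    ← (Equiv.arrowCongr (Fin.revPerm (n := n)) (Equiv.refl (Fin (n + 1) → Bool))).sum_comp]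
  refine Finset.sum_congr rfl fun h _ => ?_
  rw [← (Equiv.arrowCongr (Fin.revPerm (n := n + 1))
    (Equiv.arrowCongr (Equiv.refl (Fin n)) Equiv.boolNot)).sum_comp]
  refine Finset.sum_congr rfl fun v _ => ?_
  refine if_congr ?_ ?_ rfl
  · simp only [IsDomainWall, Equiv.arrowCongr_apply, Function.comp, Fin.revPerm_symm,
      Fin.revPerm_apply, Equiv.boolNot_apply, Equiv.refl_apply, Equiv.refl_symm, Fin.rev_zero,
      Fin.rev_last, Bool.not_eq_false', Bool.not_eq_true']
    have key : ∀ (k : Fin (n + 1)) (b : Bool),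
        (∀ i : Fin n, h i.rev k = b) ↔ ∀ i, h i k = b := fun k b =>
      ⟨fun H i => by simpa using H i.rev, fun H i => H _⟩
    simp only [key]
    tauto
  · rw [configWeight, configWeight]
    rw [← Equiv.prod_comp (Fin.revPerm (n := n))]
    refine Finset.prod_congr rfl fun i _ => Finset.prod_congr rfl fun j _ => ?_
    simp [Fin.rev_castSucc, Fin.rev_succ]

/-- The six-vertex weights with values `a₁, a₂, b₁, b₂, c₁, c₂`. -/
def vertexWeight {R : Type*} [CommRing R] (a₁ a₂ b₁ b₂ c₁ c₂ : R) :
    Bool → Bool → Bool → Bool → R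
  | false, false, false, false => a₁
  | true, true, true, true => a₂
  | false, true, false, true => b₁
  | true, false, true, false => b₂
  | false, false, true, true => c₁
  | true, true, false, false => c₂
  | _, _, _, _ => 0

/-- The homogeneous six-vertex weights with crossing parameter `s` and spectral parameter `t`. -/
def sixVertexWeight {R : Type*} [CommRing R] (s t : R) : Bool → Bool → Bool → Bool → R :=
  vertexWeight (s ^ 2 * t - 1) (s ^ 2 * t - 1) (s * (t - 1)) (s * (t - 1)) (s ^ 2 - 1)
    ((s ^ 2 - 1) * t)

/-- The inhomogeneous domain wall partition function. -/
def partitionFunction {R : Type*} [CommRing R] {n : ℕ} (s : R) (X Y : Fin n → R) : R :=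
  latticeSum fun i j => sixVertexWeight s (X i * Y j)

/-- The operator of two vertically adjacent vertices. -/
def twoRowVertex {R : Type*} [CommRing R] (w w' : Bool → Bool → Bool → Bool → R) (a b : Bool) :
    Matrix (Bool × Bool) (Bool × Bool) R :=
  Matrix.of fun p q => ∑ m, w p.1 a q.1 m * w' p.2 m q.2 b

theorem rowTransfer_mul_apply {R : Type*} [CommRing R] {n : ℕ}
    (ω ω' : Fin n → Bool → Bool → Bool → Bool → R) (a b : Fin n → Bool) :
    (rowTransfer ω * rowTransfer ω') a b =
      (List.ofFn fun j => twoRowVertex (ω j) (ω' j) (a j) (b j)).prod (false, false)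
        (true, true) := by
  simp only [Matrix.mul_apply, rowTransfer, Matrix.of_apply, prod_ofFn_apply, twoRowVertex]
  rw [← (Equiv.arrowProdEquivProdArrow (Fin (n + 1)) (fun _ => Bool) (fun _ => Bool)).symm.sum_comp,
    Fintype.sum_prod_type]
  simp only [Finset.sum_mul_sum]
  rw [Finset.sum_comm]
  refine Finset.sum_congr rfl fun p _ => ?_
  rw [Finset.sum_comm]
  refine Finset.sum_congr rfl fun q _ => ?_
  simp only [Equiv.arrowProdEquivProdArrow, Equiv.coe_fn_symm_mk, Prod.mk.injEq]
  rw [Finset.prod_univ_sum, Fintype.piFinset_univ]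
  by_cases hp : p 0 = false ∧ p (Fin.last n) = true
  · by_cases hq : q 0 = false ∧ q (Fin.last n) = true
    · simp [hp, hq, Finset.prod_mul_distrib]
    · rw [if_neg (by tauto)]
      simp [hq]
  · rw [if_neg (by tauto)]
    simp [hp]

theorem mul_prod_ofFn_of_intertwine {M : Type*} [Monoid M] {n : ℕ} (r : M) (f g : Fin n → M)
    (h : ∀ j, r * f j = g j * r) : r * (List.ofFn f).prod = (List.ofFn g).prod * r := by
  induction n with
  | zero => simp
  | succ n ih =>
    rw [List.ofFn_succ, List.ofFn_succ, List.prod_cons, List.prod_cons, ← mul_assoc, h, mul_assoc,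
      ih _ _ fun j => h j.succ, mul_assoc]

/-- The matrix intertwining the two-row vertex operators with spectral parameters exchanged. -/
def braidMatrix {R : Type*} [CommRing R] (s u v : R) : Matrix (Bool × Bool) (Bool × Bool) R :=
  Matrix.of fun p q =>
    match p, q with
    | (false, false), (false, false) => s ^ 2 * v - u
    | (true, true), (true, true) => s ^ 2 * v - u
    | (false, true), (false, true) => (s ^ 2 - 1) * u
    | (true, false), (true, false) => (s ^ 2 - 1) * v
    | (false, true), (true, false) => s * (v - u)
    | (true, false), (false, true) => s * (v - u)
    | _, _ => 0

set_option maxHeartbeats 2000000 in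
/-- The Yang–Baxter equation. -/
theorem braidMatrix_mul_twoRowVertex {R : Type*} [CommRing R] (s u v y : R) (a b : Bool) :
    braidMatrix s u v *
        twoRowVertex (sixVertexWeight s (u * y)) (sixVertexWeight s (v * y)) a b =
      twoRowVertex (sixVertexWeight s (v * y)) (sixVertexWeight s (u * y)) a b *
        braidMatrix s u v := by
  ext ⟨p, p'⟩ ⟨q, q'⟩
  cases a <;> cases b <;> cases p <;> cases p' <;> cases q <;> cases q' <;>
    simp only [Matrix.mul_apply, Fintype.sum_prod_type, Fintype.sum_bool, braidMatrix,
      twoRowVertex, sixVertexWeight, vertexWeight, Matrix.of_apply, mul_zero, zero_mul, add_zero,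
      zero_add] <;> ring

theorem rowTransfer_mul_comm_smul {R : Type*} [CommRing R] {n : ℕ} (s u v : R) (Y : Fin n → R) :
    (s ^ 2 * v - u) • ((rowTransfer fun j => sixVertexWeight s (u * Y j)) *
        rowTransfer fun j => sixVertexWeight s (v * Y j)) =
      (s ^ 2 * v - u) • ((rowTransfer fun j => sixVertexWeight s (v * Y j)) *
        rowTransfer fun j => sixVertexWeight s (u * Y j)) := by
  ext a b
  rw [Matrix.smul_apply, Matrix.smul_apply, rowTransfer_mul_apply, rowTransfer_mul_apply]
  have h := congrFun₂ (mul_prod_ofFn_of_intertwine (braidMatrix s u v)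
    (fun j => twoRowVertex (sixVertexWeight s (u * Y j)) (sixVertexWeight s (v * Y j)) (a j) (b j))
    (fun j => twoRowVertex (sixVertexWeight s (v * Y j)) (sixVertexWeight s (u * Y j)) (a j) (b j))
    fun j => braidMatrix_mul_twoRowVertex s u v (Y j) (a j) (b j)) (false, false) (true, true)
  rw [Matrix.mul_apply, Matrix.mul_apply] at h
  simp only [Fintype.sum_prod_type, Fintype.sum_bool, braidMatrix, Matrix.of_apply, zero_mul,
    mul_zero, zero_add, add_zero] at h
  rw [smul_eq_mul, smul_eq_mul, h, mul_comm]

theorem sixVertexWeight_map {R S : Type*} [CommRing R] [CommRing S] (φ : R →+* S) (s t : R)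
    (l u r d : Bool) :
    φ (sixVertexWeight s t l u r d) = sixVertexWeight (φ s) (φ t) l u r d := by
  cases l <;> cases u <;> cases r <;> cases d <;> simp [sixVertexWeight, vertexWeight]

theorem latticeSum_map {R S : Type*} [CommRing R] [CommRing S] (φ : R →+* S) {n : ℕ}
    (ω : Fin n → Fin n → Bool → Bool → Bool → Bool → R) :
    φ (latticeSum ω) = latticeSum fun i j l u r d => φ (ω i j l u r d) := by
  simp only [latticeSum, map_sum]
  refine Finset.sum_congr rfl fun h _ => Finset.sum_congr rfl fun v _ => ?_
  split_ifs <;> simp [configWeight, map_prod]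

theorem partitionFunction_map {R S : Type*} [CommRing R] [CommRing S] (φ : R →+* S) {n : ℕ}
    (s : R) (X Y : Fin n → R) :
    φ (partitionFunction s X Y) = partitionFunction (φ s) (φ ∘ X) (φ ∘ Y) := by
  simp [partitionFunction, latticeSum_map, sixVertexWeight_map]

theorem rowTransfer_map {R S : Type*} [CommRing R] [CommRing S] (φ : R →+* S) {n : ℕ}
    (ω : Fin n → Bool → Bool → Bool → Bool → R) :
    (rowTransfer ω).map φ = rowTransfer fun j l u r d => φ (ω j l u r d) := by
  ext a b
  simp only [rowTransfer, Matrix.map_apply, Matrix.of_apply, prod_ofFn_apply, map_sum]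
  refine Finset.sum_congr rfl fun h _ => ?_
  split_ifs <;> simp [map_prod]

theorem rowTransfer_mul_comm {R : Type*} [CommRing R] {n : ℕ} (s u v : R) (Y : Fin n → R) :
    Commute (rowTransfer fun j => sixVertexWeight s (u * Y j))
      (rowTransfer fun j => sixVertexWeight s (v * Y j)) := by
  have h := rowTransfer_mul_comm_smul (Polynomial.C s) Polynomial.X (Polynomial.C v)
    (fun j => Polynomial.C (Y j))
  have hreg : IsRegular ((Polynomial.X : Polynomial R) - Polynomial.C (s ^ 2 * v)) :=
    (Polynomial.monic_X_sub_C _).isRegular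
  have h' : (rowTransfer fun j =>
        sixVertexWeight (Polynomial.C s) (Polynomial.X * Polynomial.C (Y j))) *
        (rowTransfer fun j =>
          sixVertexWeight (Polynomial.C s) (Polynomial.C v * Polynomial.C (Y j))) =
      (rowTransfer fun j =>
          sixVertexWeight (Polynomial.C s) (Polynomial.C v * Polynomial.C (Y j))) *
        rowTransfer fun j =>
          sixVertexWeight (Polynomial.C s) (Polynomial.X * Polynomial.C (Y j)) := by
    ext1 a b
    have hab := congrFun₂ h a b
    simp only [Matrix.smul_apply, smul_eq_mul] at hab
    apply hreg.left
    simp only [Polynomial.C_mul, Polynomial.C_pow]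
    linear_combination -hab
  have h'' := congrArg (fun M => M.map (Polynomial.evalRingHom u)) h'
  simp only [Matrix.map_mul, rowTransfer_map, sixVertexWeight_map] at h''
  simpa [-Polynomial.X_mul_C, Commute, SemiconjBy] using h''

theorem partitionFunction_comp_perm_left {R : Type*} [CommRing R] {n : ℕ} (s : R)
    (X Y : Fin n → R) (σ : Equiv.Perm (Fin n)) :
    partitionFunction s (X ∘ σ) Y = partitionFunction s X Y := by
  rw [partitionFunction, partitionFunction, latticeSum_eq_prod_rowTransfer,
    latticeSum_eq_prod_rowTransfer]
  refine congrArg (fun M : Matrix (Fin n → Bool) (Fin n → Bool) R => M _ _)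
    (List.Perm.prod_eq' (σ.ofFn_comp_perm fun i =>
      rowTransfer fun j => sixVertexWeight s (X i * Y j)) ?_)
  rw [List.pairwise_ofFn]
  exact fun i j _ => rowTransfer_mul_comm s _ _ Y

theorem partitionFunction_comm {R : Type*} [CommRing R] {n : ℕ} (s : R) (X Y : Fin n → R) :
    partitionFunction s X Y = partitionFunction s Y X := by
  rw [partitionFunction, latticeSum_transpose, partitionFunction]
  congr 1
  funext i j l u r d
  rw [mul_comm (X j)]
  cases l <;> cases u <;> cases r <;> cases d <;> simp [sixVertexWeight, vertexWeight]

theorem partitionFunction_comp_perm_right {R : Type*} [CommRing R] {n : ℕ} (s : R)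
    (X Y : Fin n → R) (σ : Equiv.Perm (Fin n)) :
    partitionFunction s X (Y ∘ σ) = partitionFunction s X Y := by
  rw [partitionFunction_comm, partitionFunction_comp_perm_left, partitionFunction_comm]

/-- The weights vanish on vertices violating the ice rule. -/
def IceSupported {R : Type*} [CommRing R] {n : ℕ}
    (ω : Fin n → Fin n → Bool → Bool → Bool → Bool → R) : Prop :=
  ∀ i j l u r d, r.toNat + u.toNat ≠ l.toNat + d.toNat → ω i j l u r d = 0

theorem vertexWeight_eq_zero {R : Type*} [CommRing R] (a₁ a₂ b₁ b₂ c₁ c₂ : R) (l u r d : Bool)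
    (h : r.toNat + u.toNat ≠ l.toNat + d.toNat) : vertexWeight a₁ a₂ b₁ b₂ c₁ c₂ l u r d = 0 := by
  revert h
  cases l <;> cases u <;> cases r <;> cases d <;> simp [vertexWeight]

theorem configWeight_ne_zero {R : Type*} [CommRing R] {n : ℕ}
    {ω : Fin n → Fin n → Bool → Bool → Bool → Bool → R}
    {h : Fin n → Fin (n + 1) → Bool} {v : Fin (n + 1) → Fin n → Bool}
    (hne : configWeight ω h v ≠ 0) (i j : Fin n) :
    ω i j (h i j.castSucc) (v i.castSucc j) (h i j.succ) (v i.succ j) ≠ 0 := fun h0 =>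
  hne (Finset.prod_eq_zero (Finset.mem_univ i) (Finset.prod_eq_zero (Finset.mem_univ j) h0))

theorem ice_of_configWeight_ne_zero {R : Type*} [CommRing R] {n : ℕ}
    {ω : Fin n → Fin n → Bool → Bool → Bool → Bool → R} (hω : IceSupported ω)
    {h : Fin n → Fin (n + 1) → Bool} {v : Fin (n + 1) → Fin n → Bool}
    (hne : configWeight ω h v ≠ 0) (i j : Fin n) :
    (h i j.succ).toNat + (v i.castSucc j).toNat = (h i j.castSucc).toNat + (v i.succ j).toNat :=
  not_not.1 fun h0 => configWeight_ne_zero hne i j (hω _ _ _ _ _ _ h0)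

/-- Border of a configuration by a top-left corner vertex equal to `1`. -/
def borderConfig {n : ℕ} (p : (Fin n → Fin (n + 1) → Bool) × (Fin (n + 1) → Fin n → Bool)) :
    (Fin (n + 1) → Fin (n + 2) → Bool) × (Fin (n + 2) → Fin (n + 1) → Bool) :=
  (Fin.cons (Fin.cons false fun _ => true) fun i => Fin.cons false (p.1 i),
    Fin.cons (fun _ => false) fun k => Fin.cons true (p.2 k))

theorem borderConfig_injective {n : ℕ} : Function.Injective (borderConfig (n := n)) := by
  rintro ⟨h, v⟩ ⟨h', v'⟩ e
  simp only [borderConfig, Prod.mk.injEq, Fin.cons_inj, true_and] at e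
  refine Prod.ext (funext fun i => ?_) (funext fun k => ?_)
  · exact (Fin.cons_inj.1 (congrFun e.1 i)).2
  · exact (Fin.cons_inj.1 (congrFun e.2 k)).2

theorem mem_range_borderConfig {n : ℕ} {h : Fin (n + 1) → Fin (n + 2) → Bool}
    {v : Fin (n + 2) → Fin (n + 1) → Bool} (hb : IsDomainWall h v)
    (hice : ∀ i j, (h i j.succ).toNat + (v i.castSucc j).toNat =
      (h i j.castSucc).toNat + (v i.succ j).toNat)
    (hc : h 0 1 = true) : (h, v) ∈ Set.range (borderConfig (n := n)) := by
  obtain ⟨hl, hr, ht, hd⟩ := hb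
  have hrow : ∀ j : Fin (n + 1), h 0 j.succ = true := by
    intro j
    induction j using Fin.induction with
    | zero => exact hc
    | succ j ih =>
      have := hice 0 j.succ
      rw [← Fin.succ_castSucc, ih] at this
      simp only [Fin.castSucc_zero, ht] at this
      cases h' : h 0 j.succ.succ <;> (simp_all; try omega)
  have hv1 : v 1 0 = true := by
    have := hice 0 0
    simp only [Fin.castSucc_zero, ht, hl, hrow] at this
    cases h' : v 1 0 <;> simp_all
  have hcol : ∀ i : Fin (n + 1), v i.succ 0 = true := by
    intro i
    induction i using Fin.induction with
    | zero => exact hv1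
    | succ i ih =>
      have := hice i.succ 0
      rw [← Fin.succ_castSucc, ih] at this
      simp only [Fin.castSucc_zero, hl] at this
      cases h' : v i.succ.succ 0 <;> simp_all
  refine ⟨(fun i k => h i.succ k.succ, fun k j => v k.succ j.succ), ?_⟩
  refine Prod.ext (funext fun i => funext fun k => ?_) (funext fun k => funext fun j => ?_)
  · refine Fin.cases ?_ (fun i => ?_) i <;> refine Fin.cases ?_ (fun k => ?_) k <;>
      simp [borderConfig, hl, hrow]
  · refine Fin.cases ?_ (fun k => ?_) k
    · simp [borderConfig, ht]
    · refine Fin.cases ?_ (fun j => ?_) j <;> simp [borderConfig, hcol]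

theorem latticeSum_eq_of_corner {R : Type*} [CommRing R] {n : ℕ}
    (ω : Fin (n + 1) → Fin (n + 1) → Bool → Bool → Bool → Bool → R) (hω : IceSupported ω)
    (hc : ∀ d, ω 0 0 false false false d = 0) :
    latticeSum ω = ω 0 0 false false true true * (∏ j : Fin n, ω 0 j.succ true false true false) *
      (∏ i : Fin n, ω i.succ 0 false true false true) *
        latticeSum fun i j => ω i.succ j.succ := by
  rw [latticeSum, latticeSum, ← Fintype.sum_prod_type', ← Fintype.sum_prod_type', Finset.mul_sum]
  refine (Fintype.sum_of_injective borderConfig borderConfig_injective _ _ ?_ ?_).symm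
  · rintro ⟨h, v⟩ hr
    by_contra hne
    obtain ⟨hb, hne⟩ := ite_ne_right_iff.1 hne
    refine hr (mem_range_borderConfig hb (ice_of_configWeight_ne_zero hω hne) ?_)
    have := configWeight_ne_zero hne 0 0
    rw [Fin.castSucc_zero, hb.1, hb.2.2.1] at this
    by_contra h1
    simp only [Bool.not_eq_true] at h1
    exact this (by change ω 0 0 false false (h 0 1) _ = 0; rw [h1]; exact hc _)
  · rintro ⟨h, v⟩
    by_cases hb : IsDomainWall h v
    · have hb' : IsDomainWall (borderConfig (h, v)).1 (borderConfig (h, v)).2 := by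
        obtain ⟨h1, h2, h3, h4⟩ := hb
        simp only [IsDomainWall, borderConfig, Fin.forall_fin_succ (n := n), ← Fin.succ_last]
        simp [h2, h4]
      rw [if_pos hb, if_pos hb']
      simp only [configWeight, Fin.prod_univ_succ, borderConfig, Fin.castSucc_zero,
        ← Fin.succ_castSucc, Fin.cons_zero, Fin.cons_succ, hb.1, hb.2.2.1, Finset.prod_mul_distrib]
      ring
    · rw [if_neg hb, mul_zero]
      by_contra hne
      obtain ⟨hb', hne⟩ := ite_ne_right_iff.1 (Ne.symm hne)
      have hice := ice_of_configWeight_ne_zero hω hne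
      refine hb ⟨fun i => ?_, fun i => ?_, fun j => ?_, fun j => ?_⟩
      · have := hice i.succ 0
        simp only [borderConfig, ← Fin.succ_castSucc, Fin.castSucc_zero, Fin.cons_zero,
          Fin.cons_succ] at this
        cases h' : h i 0 <;> simp_all
      · simpa [borderConfig, ← Fin.succ_last] using hb'.2.1 i.succ
      · have := hice 0 j.succ
        simp only [borderConfig, ← Fin.succ_castSucc, Fin.castSucc_zero, Fin.cons_zero,
          Fin.cons_succ] at this
        cases h' : v 0 j <;> simp_all
      · simpa [borderConfig, ← Fin.succ_last] using hb'.2.2.2 j.succ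

theorem latticeSum_congr {R : Type*} [CommRing R] {n : ℕ}
    {ω ω' : Fin n → Fin n → Bool → Bool → Bool → Bool → R}
    (H : ∀ i j l u r d, (i.val = 0 → u = false) → (j.val = 0 → l = false) →
      (i.val + 1 = n → d = true) → (j.val + 1 = n → r = true) → ω i j l u r d = ω' i j l u r d) :
    latticeSum ω = latticeSum ω' := by
  refine Finset.sum_congr rfl fun h _ => Finset.sum_congr rfl fun v _ => ?_
  split_ifs with hb
  · obtain ⟨hl, hr, ht, hd⟩ := hb
    refine Finset.prod_congr rfl fun i _ => Finset.prod_congr rfl fun j _ => H _ _ _ _ _ _ ?_ ?_ ?_ ?_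
    · intro hi
      rw [← ht j]
      exact congrArg (v · j) (Fin.ext hi)
    · intro hj
      rw [← hl i]
      exact congrArg (h i) (Fin.ext hj)
    · intro hi
      rw [← hd j]
      exact congrArg (v · j) (Fin.ext hi)
    · intro hj
      rw [← hr i]
      exact congrArg (h i) (Fin.ext hj)
  · rfl

theorem partitionFunction_cons_of_eq_one {R : Type*} [CommRing R] {n : ℕ} (s x y : R)
    (X Y : Fin n → R) (hxy : s ^ 2 * (x * y) = 1) :
    partitionFunction s (Fin.cons x X : Fin (n + 1) → R) (Fin.cons y Y : Fin (n + 1) → R) =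
      (s ^ 2 - 1) * (∏ j, s * (x * Y j - 1)) * (∏ i, s * (X i * y - 1)) *
        partitionFunction s X Y := by
  rw [partitionFunction, latticeSum_eq_of_corner]
  · simp [sixVertexWeight, vertexWeight, partitionFunction]
  · exact fun i j l u r d h => vertexWeight_eq_zero _ _ _ _ _ _ l u r d h
  · rintro (_ | _) <;> simp [sixVertexWeight, vertexWeight, hxy]

theorem partitionFunction_fin_zero {R : Type*} [CommRing R] (s : R) (X Y : Fin 0 → R) :
    partitionFunction s X Y = 1 := by
  simp [partitionFunction, latticeSum_eq_prod_rowTransfer, Matrix.one_apply,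
    eq_iff_true_of_subsingleton]

/-- The product of the `a` and `b` weights. -/
def abWeight {R : Type*} [CommRing R] (s t : R) : R := (s ^ 2 * t - 1) * (s * (t - 1))

/-- The matrix whose determinant enters the Izergin–Korepin formula. -/
def ikMatrix {R : Type*} [CommRing R] {n : ℕ} (s : R) (X Y : Fin n → R) :
    Matrix (Fin n) (Fin n) R :=
  Matrix.of fun i j => ∏ k ∈ univ.erase j, abWeight s (X i * Y k)

/-- The difference of the two sides of the Izergin–Korepin formula, cleared of denominators. -/
def ikDefect {R : Type*} [CommRing R] {n : ℕ} (s : R) (X Y : Fin n → R) : R :=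
  partitionFunction s X Y * s ^ (n * (n - 1)) *
      ((Matrix.vandermonde X).det * (Matrix.vandermonde Y).det) -
    (s ^ 2 - 1) ^ n * (ikMatrix s X Y).det

theorem ikDefect_map {R S : Type*} [CommRing R] [CommRing S] (φ : R →+* S) {n : ℕ}
    (s : R) (X Y : Fin n → R) : φ (ikDefect s X Y) = ikDefect (φ s) (φ ∘ X) (φ ∘ Y) := by
  have hv : ∀ X : Fin n → R, φ.mapMatrix (Matrix.vandermonde X) = Matrix.vandermonde (φ ∘ X) := by
    intro X; ext i j; simp [Matrix.vandermonde_apply]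
  have hm : φ.mapMatrix (ikMatrix s X Y) = ikMatrix (φ s) (φ ∘ X) (φ ∘ Y) := by
    ext i j; simp [ikMatrix, abWeight]
  simp only [ikDefect, map_sub, map_mul, map_pow, partitionFunction_map, RingHom.map_det, hv, hm,
    map_one]

theorem ikDefect_comp_perm_right {R : Type*} [CommRing R] {n : ℕ} (s : R) (X Y : Fin n → R)
    (σ : Equiv.Perm (Fin n)) :
    ikDefect s X (Y ∘ σ) = (Equiv.Perm.sign σ : ℤ) * ikDefect s X Y := by
  have h1 : (Matrix.vandermonde (Y ∘ σ)).det =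
      (Equiv.Perm.sign σ : ℤ) * (Matrix.vandermonde Y).det := by
    rw [← Matrix.det_permute]; rfl
  have h2 : (ikMatrix s X (Y ∘ σ)).det = (Equiv.Perm.sign σ : ℤ) * (ikMatrix s X Y).det := by
    rw [← Matrix.det_permute']
    congr 1
    ext i j
    simp only [ikMatrix, Matrix.of_apply, Matrix.submatrix_apply, id, Function.comp]
    refine Finset.prod_bij (fun k _ => σ k) ?_ ?_ ?_ ?_
    · simp
    · simp
    · intro k hk
      exact ⟨σ.symm k, by simpa [Equiv.symm_apply_eq] using hk, by simp⟩
    · simp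
  rw [ikDefect, ikDefect, partitionFunction_comp_perm_right, h1, h2]
  ring

theorem ikDefect_cons_of_mem {R : Type*} [CommRing R] {n : ℕ} (s : R) (X : Fin n → R)
    (Y : Fin (n + 1) → R) (i : Fin n) :
    ikDefect s (Fin.cons (X i) X : Fin (n + 1) → R) Y = 0 := by
  rw [ikDefect, Matrix.det_zero_of_row_eq (Fin.succ_ne_zero i).symm,
    Matrix.det_zero_of_row_eq (M := ikMatrix _ _ _) (Fin.succ_ne_zero i).symm]
  · simp
  · ext j; simp [ikMatrix]
  · ext j; simp [Matrix.vandermonde_apply]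

theorem det_vandermonde_cons {R : Type*} [CommRing R] {n : ℕ} (x : R) (X : Fin n → R) :
    (Matrix.vandermonde (Fin.cons x X : Fin (n + 1) → R)).det =
      (∏ i, (X i - x)) * (Matrix.vandermonde X).det := by
  rw [Matrix.det_vandermonde, Matrix.det_vandermonde, Fin.prod_univ_succ, Fin.prod_Ioi_zero]
  simp [Fin.prod_Ioi_succ]

theorem det_ikMatrix_cons_of_eq_one {R : Type*} [CommRing R] {n : ℕ} (s x y : R) (X Y : Fin n → R)
    (hxy : s ^ 2 * (x * y) = 1) :
    (ikMatrix s (Fin.cons x X : Fin (n + 1) → R) (Fin.cons y Y : Fin (n + 1) → R)).det =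
      (∏ k, abWeight s (x * Y k)) * (∏ i, abWeight s (X i * y)) * (ikMatrix s X Y).det := by
  have h0 : ∀ f : Fin (n + 1) → R, ∏ k ∈ univ.erase 0, f k = ∏ k : Fin n, f k.succ := by
    intro f
    rw [Fin.univ_succ, Finset.erase_cons, Finset.prod_map]
    rfl
  have hs : ∀ (j : Fin n) (f : Fin (n + 1) → R),
      ∏ k ∈ univ.erase j.succ, f k = f 0 * ∏ k ∈ univ.erase j, f k.succ := by
    intro j f
    rw [Fin.univ_succ, Finset.cons_eq_insert, Finset.erase_insert_of_ne (Fin.succ_ne_zero j).symm,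
      Finset.prod_insert (by simp)]
    congr 1
    have : (univ.map ⟨Fin.succ, Fin.succ_injective n⟩).erase j.succ =
        (univ.erase j).map ⟨Fin.succ, Fin.succ_injective n⟩ := by
      rw [Finset.map_erase]; rfl
    rw [this, Finset.prod_map]
    rfl
  rw [Matrix.det_succ_row_zero, Finset.sum_eq_single 0]
  · have : (ikMatrix s (Fin.cons x X : Fin (n + 1) → R) (Fin.cons y Y : Fin (n + 1) → R)).submatrix
        Fin.succ (Fin.succAbove 0) =
        Matrix.of fun i j => abWeight s (X i * y) * ikMatrix s X Y i j := by
      ext i j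
      simp [ikMatrix, hs]
    rw [this, Matrix.det_mul_column]
    simp [ikMatrix, h0, mul_assoc]
  · intro j _ hj
    have : ikMatrix s (Fin.cons x X : Fin (n + 1) → R) (Fin.cons y Y : Fin (n + 1) → R) 0 j = 0 := by
      rw [ikMatrix, Matrix.of_apply]
      exact Finset.prod_eq_zero (i := 0) (by simp [hj.symm]) (by simp [abWeight, hxy])
    rw [this]
    ring
  · simp

theorem ikDefect_cons_of_eq_one {R : Type*} [CommRing R] {n : ℕ} (s x y : R) (X Y : Fin n → R)
    (hxy : s ^ 2 * (x * y) = 1) (h : ikDefect s X Y = 0) :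
    ikDefect s (Fin.cons x X : Fin (n + 1) → R) (Fin.cons y Y : Fin (n + 1) → R) = 0 := by
  rw [ikDefect, partitionFunction_cons_of_eq_one s x y X Y hxy, det_ikMatrix_cons_of_eq_one s x y X Y hxy,
    det_vandermonde_cons, det_vandermonde_cons]
  rw [ikDefect] at h
  have hx : ∏ k, abWeight s (x * Y k) =
      (s ^ 2 * x) ^ n * (∏ k, (Y k - y)) * ∏ k, s * (x * Y k - 1) := by
    rw [← Fin.prod_const, ← Finset.prod_mul_distrib, ← Finset.prod_mul_distrib]
    refine Finset.prod_congr rfl fun k _ => ?_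
    rw [abWeight]
    linear_combination (s * (x * Y k - 1)) * hxy
  have hy : ∏ i, abWeight s (X i * y) =
      (s ^ 2 * y) ^ n * (∏ i, (X i - x)) * ∏ i, s * (X i * y - 1) := by
    rw [← Fin.prod_const, ← Finset.prod_mul_distrib, ← Finset.prod_mul_distrib]
    refine Finset.prod_congr rfl fun k _ => ?_
    rw [abWeight]
    linear_combination (s * (X k * y - 1)) * hxy
  have hp : (s ^ 2 * x) ^ n * (s ^ 2 * y) ^ n = s ^ (2 * n) := by
    rw [← mul_pow, show s ^ 2 * x * (s ^ 2 * y) = s ^ 2 * (s ^ 2 * (x * y)) by ring, hxy, mul_one,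
      pow_mul]
  have he : s ^ ((n + 1) * (n + 1 - 1)) = s ^ (n * (n - 1)) * s ^ (2 * n) := by
    rw [← pow_add]
    congr 1
    rcases n with _ | n
    · rfl
    · simp only [Nat.add_sub_cancel]; ring
  rw [hx, hy, he, ← hp]
  linear_combination (s ^ 2 - 1) * (∏ j, s * (x * Y j - 1)) * (∏ i, s * (X i * y - 1)) *
    (s ^ 2 * x) ^ n * (s ^ 2 * y) ^ n * (∏ i, (X i - x)) * (∏ k, (Y k - y)) * h

open Polynomial in
theorem natDegree_det_le_of_const_rows {R : Type*} [CommRing R] {n d : ℕ}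
    (M : Matrix (Fin (n + 1)) (Fin (n + 1)) R[X]) (N : Fin n → Fin (n + 1) → R)
    (hN : ∀ i j, M i.succ j = C (N i j)) (hd : ∀ j, (M 0 j).natDegree ≤ d) :
    M.det.natDegree ≤ d := by
  rw [Matrix.det_succ_row_zero]
  refine natDegree_sum_le_of_forall_le _ _ fun j _ => ?_
  have : M.submatrix Fin.succ j.succAbove =
      C.mapMatrix (Matrix.of fun i k => N i (j.succAbove k)) := by
    ext1 i k; simp [hN]
  rw [this, ← RingHom.map_det, show (-1 : R[X]) ^ (j : ℕ) = C ((-1) ^ (j : ℕ)) by simp]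
  exact (natDegree_mul_C_le _ _).trans ((natDegree_C_mul_le _ _).trans (hd j))

open Polynomial in
theorem natDegree_sixVertexWeight_le {R : Type*} [CommRing R] (s y : R) (l u r d : Bool) :
    (sixVertexWeight (C s) (X * C y) l u r d).natDegree ≤ 1 := by
  cases l <;> cases u <;> cases r <;> cases d <;> simp only [sixVertexWeight, vertexWeight] <;>
    compute_degree!

open Polynomial in
theorem natDegree_partitionFunction_le {R : Type*} [CommRing R] {n : ℕ} (s : R) (Z : Fin n → R)
    (Y : Fin (n + 1) → R) :
    (partitionFunction (C s) (Fin.cons X (C ∘ Z) : Fin (n + 1) → R[X]) (C ∘ Y)).natDegree ≤ n := by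
  rw [partitionFunction, latticeSum]
  refine natDegree_sum_le_of_forall_le _ _ fun h _ => natDegree_sum_le_of_forall_le _ _ fun v _ => ?_
  split_ifs with hb
  · rw [configWeight, Fin.prod_univ_succ]
    have hconst : ∀ i : Fin n, (∏ j, sixVertexWeight (C s)
        ((Fin.cons X (C ∘ Z) : Fin (n + 1) → R[X]) i.succ * (C ∘ Y) j) (h i.succ j.castSucc)
          (v i.succ.castSucc j) (h i.succ j.succ) (v i.succ.succ j)) =
        C (∏ j, sixVertexWeight s (Z i * Y j) (h i.succ j.castSucc)
          (v i.succ.castSucc j) (h i.succ j.succ) (v i.succ.succ j)) := by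
      intro i
      simp [sixVertexWeight_map]
    rw [Finset.prod_congr rfl fun i _ => hconst i, ← map_prod]
    refine (natDegree_mul_C_le _ _).trans ?_
    obtain ⟨j, hj, hj'⟩ : ∃ j : Fin (n + 1), h 0 j.castSucc = false ∧ h 0 j.succ = true := by
      by_contra hne
      push Not at hne
      have : ∀ k, h 0 k = false := by
        intro k
        induction k using Fin.induction with
        | zero => exact hb.1 0
        | succ k ih => simpa using hne k ih
      simpa [this] using hb.2.1 0
    rw [← Finset.mul_prod_erase _ _ (Finset.mem_univ j)]
    refine natDegree_mul_le.trans ?_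
    have h0 : (sixVertexWeight (C s) ((Fin.cons X (C ∘ Z) : Fin (n + 1) → R[X]) 0 * (C ∘ Y) j)
        (h 0 j.castSucc) (v (Fin.castSucc 0) j) (h 0 j.succ) (v (Fin.succ 0) j)).natDegree = 0 := by
      rw [hj, hj', Fin.castSucc_zero, hb.2.2.1]
      cases v (Fin.succ 0) j
      · simp [sixVertexWeight, vertexWeight]
      · simp only [sixVertexWeight, vertexWeight]
        rw [← C_pow, ← C_1, ← C_sub, natDegree_C]
    rw [h0, zero_add]
    refine (natDegree_prod_le _ _).trans ((Finset.sum_le_sum fun k _ => ?_).trans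
      (b := ∑ k ∈ univ.erase j, 1) ?_)
    · exact natDegree_sixVertexWeight_le _ _ _ _ _ _
    · simp
  · simp

open Polynomial in
theorem natDegree_ikDefect_le {R : Type*} [CommRing R] {n : ℕ} (s : R) (Z : Fin n → R)
    (Y : Fin (n + 1) → R) :
    (ikDefect (C s) (Fin.cons X (C ∘ Z) : Fin (n + 1) → R[X]) (C ∘ Y)).natDegree ≤ 2 * n := by
  rw [ikDefect]
  refine (natDegree_sub_le _ _).trans (max_le ?_ ?_)
  · have h1 : (Matrix.vandermonde (Fin.cons X (C ∘ Z) : Fin (n + 1) → R[X])).det.natDegree ≤ n := by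
      refine natDegree_det_le_of_const_rows _ (fun i j => Z i ^ (j : ℕ)) (fun i j => ?_) fun j => ?_
      · simp [Matrix.vandermonde_apply]
      · simpa [Matrix.vandermonde_apply] using (natDegree_X_pow_le _).trans (Nat.lt_succ_iff.1 j.2)
    have h2 : (Matrix.vandermonde (C ∘ Y)).det = C (Matrix.vandermonde Y).det := by
      rw [RingHom.map_det]
      congr 1
      ext1 i j
      simp [Matrix.vandermonde_apply]
    rw [h2, ← C_pow, two_mul]
    exact natDegree_mul_le_of_le ((natDegree_mul_C_le _ _).trans (natDegree_partitionFunction_le s Z Y))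
      ((natDegree_mul_C_le _ _).trans h1)
  · rw [show (C s ^ 2 - 1 : R[X]) ^ (n + 1) = C ((s ^ 2 - 1) ^ (n + 1)) by simp]
    refine (natDegree_C_mul_le _ _).trans ?_
    refine natDegree_det_le_of_const_rows _ (fun i j => ∏ k ∈ univ.erase j, abWeight s (Z i * Y k)) (fun i j => ?_) fun j => ?_
    · simp [ikMatrix, abWeight]
    · simp only [ikMatrix, Matrix.of_apply, Fin.cons_zero]
      refine (natDegree_prod_le _ _).trans ((Finset.sum_le_sum fun k _ => ?_).trans
        (b := ∑ k ∈ univ.erase j, 2) ?_)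
      · simp only [abWeight, Function.comp]
        compute_degree
      · simp [mul_comm]

theorem izergin_korepin {K : Type*} [Field K] {n : ℕ} (s : K) (X Y : Fin n → K) (hs : s ≠ 0)
    (hY0 : ∀ j, Y j ≠ 0) (hX : Function.Injective X) (hY : Function.Injective Y)
    (hXY : ∀ i j, s ^ 2 * (X i * Y j) ≠ 1) : ikDefect s X Y = 0 := by
  induction n with
  | zero => simp [ikDefect, partitionFunction_fin_zero]
  | succ n ih =>
    have heval : ∀ x, (ikDefect (Polynomial.C s) (Fin.cons Polynomial.X (Polynomial.C ∘ Fin.tail X) :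
        Fin (n + 1) → Polynomial K) (Polynomial.C ∘ Y)).eval x =
        ikDefect s (Fin.cons x (Fin.tail X) : Fin (n + 1) → K) Y := by
      intro x
      have := ikDefect_map (Polynomial.evalRingHom x) (Polynomial.C s)
        (Fin.cons Polynomial.X (Polynomial.C ∘ Fin.tail X) : Fin (n + 1) → Polynomial K)
        (Polynomial.C ∘ Y)
      rw [Polynomial.coe_evalRingHom] at this
      rw [this]
      congr 1
      · simp
      · ext i; refine Fin.cases ?_ (fun i => ?_) i <;> simp
      · ext i; simp
    have hzero := Polynomial.eq_zero_of_natDegree_lt_card_of_eval_eq_zero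
      (ikDefect (Polynomial.C s) (Fin.cons Polynomial.X (Polynomial.C ∘ Fin.tail X) :
        Fin (n + 1) → Polynomial K) (Polynomial.C ∘ Y))
      (ι := Fin n ⊕ Fin (n + 1)) (f := Sum.elim (Fin.tail X) fun j => (s ^ 2 * Y j)⁻¹) ?_ ?_ ?_
    · have := heval (X 0)
      rw [Fin.cons_self_tail, hzero] at this
      simpa using this.symm
    · refine Function.Injective.sumElim (hX.comp (Fin.succ_injective n)) ?_ ?_
      · intro j j' hjj
        have := inv_injective hjj
        exact hY (mul_left_cancel₀ (pow_ne_zero 2 hs) this)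
      · intro i j h
        apply hXY i.succ j
        have h2 : s ^ 2 * Y j ≠ 0 := mul_ne_zero (pow_ne_zero 2 hs) (hY0 j)
        have : X i.succ = (s ^ 2 * Y j)⁻¹ := h
        rw [this]
        have := hY0 j
        field_simp
    · rintro (i | j)
      · rw [heval]
        exact ikDefect_cons_of_mem s (Fin.tail X) Y i
      · rw [heval]
        have hperm := ikDefect_comp_perm_right s
          (Fin.cons (s ^ 2 * Y j)⁻¹ (Fin.tail X) : Fin (n + 1) → K) Y (Equiv.swap 0 j)
        have hunit : (((Equiv.Perm.sign (Equiv.swap 0 j) : ℤˣ) : ℤ) : K) ≠ 0 := by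
          rcases Int.units_eq_one_or (Equiv.Perm.sign (Equiv.swap 0 j)) with h | h <;> simp [h]
        refine (mul_eq_zero.1 (hperm.symm.trans ?_)).resolve_left hunit
        rw [← Fin.cons_self_tail (Y ∘ Equiv.swap 0 j)]
        have hswap : Function.Injective (Y ∘ Equiv.swap 0 j) := hY.comp (Equiv.injective _)
        refine ikDefect_cons_of_eq_one s _ _ _ _ ?_ (ih _ _ ?_ ?_ ?_ ?_)
        · have := hY0 j
          simp only [Function.comp, Equiv.swap_apply_left]
          field_simp
        · exact fun k => hY0 _
        · exact hX.comp (Fin.succ_injective n)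
        · exact hswap.comp (Fin.succ_injective n)
        · exact fun i k => hXY _ _
    · refine (Nat.lt_succ_of_le (natDegree_ikDefect_le s (Fin.tail X) Y)).trans_le ?_
      simp
      omega

theorem det_sumElim_comp_of_isUnit {α β R : Type*} [CommRing R] {n : ℕ} (F : α → β → R)
    (X : Fin n → α) (Y : Fin n → β) (h : IsUnit (Matrix.of fun i j => F (X i) (Y j)).det) :
    ∃ S : α → β → R, ∀ (p q : ℕ) (e : Fin q ≃ Fin n ⊕ Fin p) (x : Fin p → α) (y : Fin p → β),
      (Matrix.of fun i j => F (Sum.elim X x (e i)) (Sum.elim Y y (e j))).det =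
        (Matrix.of fun i j => F (X i) (Y j)).det * (Matrix.of fun i j => S (x i) (y j)).det := by
  obtain ⟨_⟩ := ((Matrix.isUnit_iff_isUnit_det _).2 h).nonempty_invertible
  refine ⟨fun a b => F a b -
    ∑ k, (∑ i, F a (Y i) * (⅟(Matrix.of fun i j => F (X i) (Y j))) i k) * F (X k) b,
    fun p q e x y => ?_⟩
  have h1 : (Matrix.of fun i j => F (Sum.elim X x (e i)) (Sum.elim Y y (e j))) =
      (Matrix.fromBlocks (Matrix.of fun i j => F (X i) (Y j)) (Matrix.of fun i j => F (X i) (y j))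
        (Matrix.of fun i j => F (x i) (Y j)) (Matrix.of fun i j => F (x i) (y j))).submatrix e e := by
    ext i j
    rw [Matrix.submatrix_apply, Matrix.of_apply]
    cases e i <;> cases e j <;> rfl
  rw [h1, Matrix.det_submatrix_equiv_self, Matrix.det_fromBlocks₁₁]
  congr 2

/-- Split off the first index. -/
def finSuccEquivSum (n : ℕ) : Fin (n + 1) ≃ Fin n ⊕ Fin 1 where
  toFun := Fin.cons (Sum.inr 0) Sum.inl
  invFun := Sum.elim Fin.succ fun _ => 0
  left_inv i := by refine Fin.cases ?_ (fun i => ?_) i <;> rfl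
  right_inv := by
    rintro (i | i)
    · rfl
    · exact congrArg Sum.inr (Subsingleton.elim 0 i)

/-- Split off the first two indices. -/
def finSuccSuccEquivSum (n : ℕ) : Fin (n + 2) ≃ Fin n ⊕ Fin 2 where
  toFun := Fin.cons (Sum.inr 0) (Fin.cons (Sum.inr 1) Sum.inl)
  invFun := Sum.elim (fun i => i.succ.succ) ![0, 1]
  left_inv i := by
    refine Fin.cases ?_ (fun i => ?_) i
    · rfl
    · refine Fin.cases ?_ (fun i => ?_) i <;> rfl
  right_inv := by
    rintro (i | i)
    · rfl
    · fin_cases i <;> rfl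

theorem sumElim_finSuccEquivSum {α : Type*} {n : ℕ} (x : α) (X : Fin n → α) (i : Fin (n + 1)) :
    Sum.elim X ![x] (finSuccEquivSum n i) = (Fin.cons x X : Fin (n + 1) → α) i := by
  refine Fin.cases ?_ (fun i => ?_) i <;> rfl

theorem sumElim_finSuccSuccEquivSum {α : Type*} {n : ℕ} (x x' : α) (X : Fin n → α)
    (i : Fin (n + 2)) :
    Sum.elim X ![x, x'] (finSuccSuccEquivSum n i) =
      (Fin.cons x (Fin.cons x' X) : Fin (n + 2) → α) i := by
  refine Fin.cases ?_ (fun i => ?_) i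
  · rfl
  · refine Fin.cases ?_ (fun i => ?_) i <;> rfl

theorem desnanotJacobi_of_isUnit {α β R : Type*} [CommRing R] {n : ℕ} (F : α → β → R)
    (x x' : α) (y y' : β) (X : Fin n → α) (Y : Fin n → β)
    (h : IsUnit (Matrix.of fun i j => F (X i) (Y j)).det) :
    (Matrix.of fun i j => F ((Fin.cons x (Fin.cons x' X) : Fin (n + 2) → α) i)
        ((Fin.cons y (Fin.cons y' Y) : Fin (n + 2) → β) j)).det *
        (Matrix.of fun i j => F (X i) (Y j)).det =
      (Matrix.of fun i j => F ((Fin.cons x X : Fin (n + 1) → α) i)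
          ((Fin.cons y Y : Fin (n + 1) → β) j)).det *
        (Matrix.of fun i j => F ((Fin.cons x' X : Fin (n + 1) → α) i)
          ((Fin.cons y' Y : Fin (n + 1) → β) j)).det -
      (Matrix.of fun i j => F ((Fin.cons x X : Fin (n + 1) → α) i)
          ((Fin.cons y' Y : Fin (n + 1) → β) j)).det *
        (Matrix.of fun i j => F ((Fin.cons x' X : Fin (n + 1) → α) i)
          ((Fin.cons y Y : Fin (n + 1) → β) j)).det := by
  obtain ⟨S, hS⟩ := det_sumElim_comp_of_isUnit F X Y h
  have h1 : ∀ x y, (Matrix.of fun i j => F ((Fin.cons x X : Fin (n + 1) → α) i)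
      ((Fin.cons y Y : Fin (n + 1) → β) j)).det =
        (Matrix.of fun i j => F (X i) (Y j)).det * S x y := by
    intro x y
    have := hS 1 (n + 1) (finSuccEquivSum n) ![x] ![y]
    simp only [sumElim_finSuccEquivSum] at this
    simpa using this
  have h2 := hS 2 (n + 2) (finSuccSuccEquivSum n) ![x, x'] ![y, y']
  simp only [sumElim_finSuccSuccEquivSum] at h2
  simp only [h1, h2]
  rw [Matrix.det_fin_two]
  simp
  ring

theorem apply_cons {α γ : Type*} {n : ℕ} (f : α → γ) (a : α) (J : Fin n → α) (i : Fin (n + 1)) :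
    f ((Fin.cons a J : Fin (n + 1) → α) i) =
      (Fin.cons (f a) fun k => f (J k) : Fin (n + 1) → γ) i := by
  refine Fin.cases ?_ (fun i => ?_) i <;> rfl

/-- The Desnanot–Jacobi identity. -/
theorem desnanotJacobi {α β R : Type*} [CommRing R] {n : ℕ} (F : α → β → R)
    (x x' : α) (y y' : β) (X : Fin n → α) (Y : Fin n → β) :
    (Matrix.of fun i j => F ((Fin.cons x (Fin.cons x' X) : Fin (n + 2) → α) i)
        ((Fin.cons y (Fin.cons y' Y) : Fin (n + 2) → β) j)).det *
        (Matrix.of fun i j => F (X i) (Y j)).det =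
      (Matrix.of fun i j => F ((Fin.cons x X : Fin (n + 1) → α) i)
          ((Fin.cons y Y : Fin (n + 1) → β) j)).det *
        (Matrix.of fun i j => F ((Fin.cons x' X : Fin (n + 1) → α) i)
          ((Fin.cons y' Y : Fin (n + 1) → β) j)).det -
      (Matrix.of fun i j => F ((Fin.cons x X : Fin (n + 1) → α) i)
          ((Fin.cons y' Y : Fin (n + 1) → β) j)).det *
        (Matrix.of fun i j => F ((Fin.cons x' X : Fin (n + 1) → α) i)
          ((Fin.cons y Y : Fin (n + 1) → β) j)).det := by
  let P := MvPolynomial (Fin (n + 2) × Fin (n + 2)) ℤ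
  let ι : P →+* FractionRing P := algebraMap P (FractionRing P)
  have hι : Function.Injective ι := IsFractionRing.injective P (FractionRing P)
  let G : Fin (n + 2) → Fin (n + 2) → P := fun i j => MvPolynomial.X (i, j)
  let I : Fin n → Fin (n + 2) := fun i => i.succ.succ
  have hG : (Matrix.of fun i j => G (I i) (I j)).det ≠ 0 := by
    intro h0
    have h1 := congrArg (MvPolynomial.aeval (R := ℤ)
      fun p : Fin (n + 2) × Fin (n + 2) => if p.1 = p.2 then (1 : ℤ) else 0) h0
    rw [map_zero, AlgHom.map_det] at h1
    refine one_ne_zero ((Eq.trans ?_ h1 : (1 : ℤ) = 0))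
    rw [← Matrix.det_one (n := Fin n)]
    congr 1
    ext i j
    simp [G, I, Matrix.one_apply]
  have key := desnanotJacobi_of_isUnit (fun i j => ι (G i j)) 0 1 0 1 I I (by
    rw [isUnit_iff_ne_zero]
    intro h0
    refine hG (hι ?_)
    rw [RingHom.map_det, map_zero]
    exact h0)
  have hdet : ∀ (k : ℕ) (I J : Fin k → Fin (n + 2)),
      (Matrix.of fun i j => ι (G (I i) (J j))).det = ι (Matrix.of fun i j => G (I i) (J j)).det := by
    intro k I J
    rw [RingHom.map_det]
    rfl
  simp only [hdet, ← map_mul, ← map_sub] at key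
  obtain ⟨X', hX0, hX1, hXI⟩ : ∃ X' : Fin (n + 2) → α, X' 0 = x ∧ X' 1 = x' ∧ ∀ k, X' (I k) = X k :=
    ⟨Fin.cons x (Fin.cons x' X), rfl, rfl, fun _ => rfl⟩
  obtain ⟨Y', hY0, hY1, hYI⟩ : ∃ Y' : Fin (n + 2) → β, Y' 0 = y ∧ Y' 1 = y' ∧ ∀ k, Y' (I k) = Y k :=
    ⟨Fin.cons y (Fin.cons y' Y), rfl, rfl, fun _ => rfl⟩
  have key' := congrArg (MvPolynomial.aeval (R := ℤ) fun p : Fin (n + 2) × Fin (n + 2) =>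
    F (X' p.1) (Y' p.2)) (hι key)
  have hdet' : ∀ (k : ℕ) (I J : Fin k → Fin (n + 2)),
      (MvPolynomial.aeval (R := ℤ) fun p : Fin (n + 2) × Fin (n + 2) => F (X' p.1) (Y' p.2))
          (Matrix.of fun i j => G (I i) (J j)).det =
      (Matrix.of fun i j => F (X' (I i)) (Y' (J j))).det := by
    intro k I J
    rw [AlgHom.map_det]
    congr 1
    ext i j
    simp [G]
  simp only [map_mul, map_sub, hdet', apply_cons X', apply_cons Y', hX0, hX1, hXI, hY0, hY1,
    hYI] at key'
  exact key'

theorem det_ikMatrix_eq_prod_mul {K : Type*} [Field K] {n : ℕ} (s : K) (X Y : Fin n → K)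
    (hab : ∀ i j, abWeight s (X i * Y j) ≠ 0) :
    (ikMatrix s X Y).det = (∏ i, ∏ j, abWeight s (X i * Y j)) *
      (Matrix.of fun i j => (abWeight s (X i * Y j))⁻¹).det := by
  rw [← Matrix.det_mul_column]
  congr 1
  ext i j
  simp only [ikMatrix, Matrix.of_apply]
  rw [← Finset.mul_prod_erase _ _ (Finset.mem_univ j), mul_comm, inv_mul_cancel_left₀ (hab i j)]

theorem partitionFunction_desnanotJacobi_of_field {K : Type*} [Field K] {n : ℕ} (s x x' y y' : K)
    (X Y : Fin n → K) (hs : s ≠ 0)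
    (hX : Function.Injective (Fin.cons x (Fin.cons x' X) : Fin (n + 2) → K))
    (hY : Function.Injective (Fin.cons y (Fin.cons y' Y) : Fin (n + 2) → K))
    (hY0 : ∀ j, (Fin.cons y (Fin.cons y' Y) : Fin (n + 2) → K) j ≠ 0)
    (hXY : ∀ i j, abWeight s ((Fin.cons x (Fin.cons x' X) : Fin (n + 2) → K) i *
      (Fin.cons y (Fin.cons y' Y) : Fin (n + 2) → K) j) ≠ 0) :
    s ^ 2 * (x' - x) * (y' - y) *
        partitionFunction s (Fin.cons x (Fin.cons x' X) : Fin (n + 2) → K)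
          (Fin.cons y (Fin.cons y' Y) : Fin (n + 2) → K) * partitionFunction s X Y =
      abWeight s (x * y') * abWeight s (x' * y) *
          partitionFunction s (Fin.cons x X : Fin (n + 1) → K) (Fin.cons y Y : Fin (n + 1) → K) *
          partitionFunction s (Fin.cons x' X : Fin (n + 1) → K) (Fin.cons y' Y : Fin (n + 1) → K) -
        abWeight s (x * y) * abWeight s (x' * y') *
          partitionFunction s (Fin.cons x X : Fin (n + 1) → K) (Fin.cons y' Y : Fin (n + 1) → K) *
          partitionFunction s (Fin.cons x' X : Fin (n + 1) → K)
            (Fin.cons y Y : Fin (n + 1) → K) := by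
  have hIK : ∀ (m : ℕ) (U V : Fin m → K), Function.Injective U → Function.Injective V →
      (∀ j, V j ≠ 0) → (∀ i j, abWeight s (U i * V j) ≠ 0) →
      partitionFunction s U V * s ^ (m * (m - 1)) *
        ((Matrix.vandermonde U).det * (Matrix.vandermonde V).det) =
      (s ^ 2 - 1) ^ m * ((∏ i, ∏ j, abWeight s (U i * V j)) *
        (Matrix.of fun i j => (abWeight s (U i * V j))⁻¹).det) := by
    intro m U V hU hV hV0 hUV
    rw [← det_ikMatrix_eq_prod_mul s U V hUV, ← sub_eq_zero]
    refine izergin_korepin s U V hs hV0 hU hV fun i j h => hUV i j ?_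
    rw [abWeight, h, sub_self, zero_mul]
  have h2 := hIK (n + 2) _ _ hX hY hY0 hXY
  simp only [Fin.forall_fin_succ (n := n + 1), Fin.forall_fin_succ (n := n), Fin.cons_zero,
    Fin.cons_succ] at hXY hY0
  simp only [Fin.cons_injective_iff, Fin.range_cons, Set.mem_insert_iff, not_or] at hX hY
  obtain ⟨⟨hxx, hxX⟩, hx'X, hX⟩ := hX
  obtain ⟨⟨hyy, hyY⟩, hy'Y, hY⟩ := hY
  have h0 := hIK n X Y hX hY hY0.2.2 fun i j => (hXY.2.2 i).2.2 j
  have h1 : ∀ a b, a ∉ Set.range X → b ∉ Set.range Y → b ≠ 0 → abWeight s (a * b) ≠ 0 →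
      (∀ i, abWeight s (X i * b) ≠ 0) → (∀ j, abWeight s (a * Y j) ≠ 0) → _ :=
    fun a b haX hbY hb0 hab hXb haY => hIK (n + 1) (Fin.cons a X) (Fin.cons b Y)
      (Fin.cons_injective_iff.2 ⟨haX, hX⟩) (Fin.cons_injective_iff.2 ⟨hbY, hY⟩)
      (by simp [Fin.forall_fin_succ (n := n), hb0, hY0.2.2])
      (by
        simp only [Fin.forall_fin_succ (n := n), Fin.cons_zero, Fin.cons_succ]
        exact ⟨⟨hab, haY⟩, fun i => ⟨hXb i, fun j => (hXY.2.2 i).2.2 j⟩⟩)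
  have hxy := h1 x y hxX hyY hY0.1 hXY.1.1 (fun i => (hXY.2.2 i).1) hXY.1.2.2
  have hxy' := h1 x y' hxX hy'Y hY0.2.1 hXY.1.2.1 (fun i => (hXY.2.2 i).2.1) hXY.1.2.2
  have hx'y := h1 x' y hx'X hyY hY0.1 hXY.2.1.1 (fun i => (hXY.2.2 i).1) hXY.2.1.2.2
  have hx'y' := h1 x' y' hx'X hy'Y hY0.2.1 hXY.2.1.2.1 (fun i => (hXY.2.2 i).2.1) hXY.2.1.2.2
  have hDJ := desnanotJacobi (fun a b => (abWeight s (a * b))⁻¹) x x' y y' X Y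
  have hne : ∀ (U : Fin n → K) (u : K), u ∉ Set.range U → ∏ i, (U i - u) ≠ 0 := fun U u hu =>
    Finset.prod_ne_zero_iff.2 fun i _ h => hu ⟨i, sub_eq_zero.1 h⟩
  have hv := Matrix.det_vandermonde_ne_zero_iff.2 hX
  have hw := Matrix.det_vandermonde_ne_zero_iff.2 hY
  have e1 : (n + 1) * (n + 1 - 1) = n * (n - 1) + 2 * n := by
    rcases n with _ | n
    · rfl
    · simp only [Nat.add_sub_cancel]; ring
  have e2 : (n + 2) * (n + 2 - 1) = n * (n - 1) + 4 * n + 2 := by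
    rcases n with _ | n
    · rfl
    · simp only [Nat.add_sub_cancel, show n + 1 + 2 - 1 = n + 2 by omega]; ring
  simp only [det_vandermonde_cons, Fin.prod_univ_succ, Fin.cons_zero, Fin.cons_succ,
    Finset.prod_mul_distrib, e1, e2] at h0 h2 hxy hxy' hx'y hx'y'
  generalize hN0 : (Matrix.of fun i j => (abWeight s (X i * Y j))⁻¹).det = N0 at *
  generalize hN2 : (Matrix.of fun i j =>
    (abWeight s ((Fin.cons x (Fin.cons x' X) : Fin (n + 2) → K) i *
      (Fin.cons y (Fin.cons y' Y) : Fin (n + 2) → K) j))⁻¹).det = N2 at *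
  generalize hNxy : (Matrix.of fun i j =>
    (abWeight s ((Fin.cons x X : Fin (n + 1) → K) i *
      (Fin.cons y Y : Fin (n + 1) → K) j))⁻¹).det = Nxy at *
  generalize hNxy' : (Matrix.of fun i j =>
    (abWeight s ((Fin.cons x X : Fin (n + 1) → K) i *
      (Fin.cons y' Y : Fin (n + 1) → K) j))⁻¹).det = Nxy' at *
  generalize hNx'y : (Matrix.of fun i j =>
    (abWeight s ((Fin.cons x' X : Fin (n + 1) → K) i *
      (Fin.cons y Y : Fin (n + 1) → K) j))⁻¹).det = Nx'y at *
  generalize hNx'y' : (Matrix.of fun i j =>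
    (abWeight s ((Fin.cons x' X : Fin (n + 1) → K) i *
      (Fin.cons y' Y : Fin (n + 1) → K) j))⁻¹).det = Nx'y' at *
  generalize n * (n - 1) = k at *
  have hDx := hne X x hxX
  have hDx' := hne X x' hx'X
  have hDy := hne Y y hyY
  have hDy' := hne Y y' hy'Y
  refine mul_right_cancel₀ (b := s ^ (2 * k + 4 * n) * ((∏ i, (X i - x)) * (∏ i, (X i - x')) *
    (∏ i, (Y i - y)) * (∏ i, (Y i - y'))) *
      ((Matrix.vandermonde X).det * (Matrix.vandermonde Y).det) ^ 2)
    (by simp [hs, hDx, hDx', hDy, hDy', hv, hw]) ?_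
  have p1 := congrArg₂ (· * ·) h2 h0
  have p2 := congrArg₂ (· * ·) hxy hx'y'
  have p3 := congrArg₂ (· * ·) hxy' hx'y
  simp only at p1 p2 p3
  linear_combination p1 - abWeight s (x * y') * abWeight s (x' * y) * p2 +
    abWeight s (x * y) * abWeight s (x' * y') * p3 + (s ^ 2 - 1) ^ (2 * n + 2) *
    (∏ i, ∏ j, abWeight s (X i * Y j)) ^ 2 * (∏ i, abWeight s (X i * y)) *
    (∏ i, abWeight s (X i * y')) * (∏ j, abWeight s (x * Y j)) * (∏ j, abWeight s (x' * Y j)) *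
    abWeight s (x * y) * abWeight s (x * y') * abWeight s (x' * y) * abWeight s (x' * y') * hDJ

theorem abWeight_map {R S : Type*} [CommRing R] [CommRing S] (φ : R →+* S) (s t : R) :
    φ (abWeight s t) = abWeight (φ s) (φ t) := by
  simp [abWeight]

theorem cons_cons_succ_succ {α : Type*} {n : ℕ} (f : Fin (n + 2) → α) :
    (Fin.cons (f 0) (Fin.cons (f 1) fun i => f i.succ.succ) : Fin (n + 2) → α) = f := by
  funext i
  refine Fin.cases rfl (fun i => ?_) i
  exact Fin.cases rfl (fun i => rfl) i

/-- The difference of the two sides of `partitionFunction_desnanotJacobi`. -/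
def desnanotJacobiDefect {R : Type*} [CommRing R] {n : ℕ} (s x x' y y' : R) (X Y : Fin n → R) :
    R :=
  s ^ 2 * (x' - x) * (y' - y) *
        partitionFunction s (Fin.cons x (Fin.cons x' X) : Fin (n + 2) → R)
          (Fin.cons y (Fin.cons y' Y) : Fin (n + 2) → R) * partitionFunction s X Y -
      (abWeight s (x * y') * abWeight s (x' * y) *
          partitionFunction s (Fin.cons x X : Fin (n + 1) → R) (Fin.cons y Y : Fin (n + 1) → R) *
          partitionFunction s (Fin.cons x' X : Fin (n + 1) → R) (Fin.cons y' Y : Fin (n + 1) → R) -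
        abWeight s (x * y) * abWeight s (x' * y') *
          partitionFunction s (Fin.cons x X : Fin (n + 1) → R) (Fin.cons y' Y : Fin (n + 1) → R) *
          partitionFunction s (Fin.cons x' X : Fin (n + 1) → R)
            (Fin.cons y Y : Fin (n + 1) → R))

theorem desnanotJacobiDefect_map {R S : Type*} [CommRing R] [CommRing S] (φ : R →+* S) {n : ℕ}
    (s x x' y y' : R) (X Y : Fin n → R) :
    φ (desnanotJacobiDefect s x x' y y' X Y) =
      desnanotJacobiDefect (φ s) (φ x) (φ x') (φ y) (φ y') (φ ∘ X) (φ ∘ Y) := by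
  simp only [desnanotJacobiDefect, map_sub, map_mul, map_pow, partitionFunction_map, abWeight_map,
    Fin.comp_cons]

/-- The Desnanot–Jacobi identity for the domain wall partition function. -/
theorem partitionFunction_desnanotJacobi {R : Type*} [CommRing R] {n : ℕ} (s x x' y y' : R)
    (X Y : Fin n → R) :
    s ^ 2 * (x' - x) * (y' - y) *
        partitionFunction s (Fin.cons x (Fin.cons x' X) : Fin (n + 2) → R)
          (Fin.cons y (Fin.cons y' Y) : Fin (n + 2) → R) * partitionFunction s X Y =
      abWeight s (x * y') * abWeight s (x' * y) *
          partitionFunction s (Fin.cons x X : Fin (n + 1) → R) (Fin.cons y Y : Fin (n + 1) → R) *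
          partitionFunction s (Fin.cons x' X : Fin (n + 1) → R) (Fin.cons y' Y : Fin (n + 1) → R) -
        abWeight s (x * y) * abWeight s (x' * y') *
          partitionFunction s (Fin.cons x X : Fin (n + 1) → R) (Fin.cons y' Y : Fin (n + 1) → R) *
          partitionFunction s (Fin.cons x' X : Fin (n + 1) → R)
            (Fin.cons y Y : Fin (n + 1) → R) := by
  rw [← sub_eq_zero]
  change desnanotJacobiDefect s x x' y y' X Y = 0
  let P := MvPolynomial (Unit ⊕ Bool × Fin (n + 2)) ℤ
  let ι : P →+* FractionRing P := algebraMap P (FractionRing P)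
  have hι : Function.Injective ι := IsFractionRing.injective P (FractionRing P)
  let S : P := MvPolynomial.X (Sum.inl ())
  let W : Bool → Fin (n + 2) → P := fun b i => MvPolynomial.X (Sum.inr (b, i))
  have hW : ∀ b, Function.Injective (W b) := fun b i j h => by
    simpa using MvPolynomial.X_injective h
  have hc0 : ∀ b i, MvPolynomial.constantCoeff (W b i) = 0 := fun b i => by simp [W]
  have hab : ∀ i j, abWeight S (W false i * W true j) ≠ 0 := fun i j => by
    refine mul_ne_zero ?_ (mul_ne_zero (MvPolynomial.X_ne_zero _) ?_)
    · intro h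
      simpa [hc0] using congrArg MvPolynomial.constantCoeff h
    · intro h
      simpa [hc0] using congrArg MvPolynomial.constantCoeff h
  have key : desnanotJacobiDefect S (W false 0) (W false 1) (W true 0) (W true 1)
      (fun i => W false i.succ.succ) (fun i => W true i.succ.succ) = 0 := by
    refine hι ?_
    rw [desnanotJacobiDefect_map, map_zero, desnanotJacobiDefect, sub_eq_zero]
    have hcons : ∀ b, (Fin.cons (ι (W b 0)) (Fin.cons (ι (W b 1))
        (ι ∘ fun i => W b i.succ.succ)) : Fin (n + 2) → FractionRing P) = ι ∘ W b :=
      fun b => cons_cons_succ_succ (ι ∘ W b)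
    have h0 : ∀ p : P, p ≠ 0 → ι p ≠ 0 := fun p hp h => hp (hι (h.trans (map_zero ι).symm))
    refine partitionFunction_desnanotJacobi_of_field _ _ _ _ _ _ _ (h0 _ (MvPolynomial.X_ne_zero _))
      ?_ ?_ ?_ ?_
    · rw [hcons]
      exact hι.comp (hW false)
    · rw [hcons]
      exact hι.comp (hW true)
    · rw [hcons]
      exact fun j => h0 _ (MvPolynomial.X_ne_zero _)
    · rw [hcons, hcons]
      intro i j
      rw [Function.comp, Function.comp, ← map_mul, ← abWeight_map]
      exact h0 _ (hab i j)
  let φ : P →+* R := MvPolynomial.eval₂Hom (Int.castRingHom R) (Sum.elim (fun _ => s) fun p =>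
    bif p.1 then (Fin.cons y (Fin.cons y' Y) : Fin (n + 2) → R) p.2
      else (Fin.cons x (Fin.cons x' X) : Fin (n + 2) → R) p.2)
  have hφ := congrArg φ key
  rw [desnanotJacobiDefect_map, map_zero] at hφ
  have hS : φ S = s := MvPolynomial.eval₂Hom_X' _ _ _
  have hWf : ∀ i, φ (W false i) = (Fin.cons x (Fin.cons x' X) : Fin (n + 2) → R) i := by
    exact fun i => MvPolynomial.eval₂Hom_X' _ _ _
  have hWt : ∀ i, φ (W true i) = (Fin.cons y (Fin.cons y' Y) : Fin (n + 2) → R) i := by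
    exact fun i => MvPolynomial.eval₂Hom_X' _ _ _
  simp only [Function.comp_def, hS, hWf, hWt] at hφ
  exact hφ

theorem sum_filter_le_sub {n : ℕ} (g : Fin (n + 1) → ℤ) (j : Fin n) :
    ∑ j' ∈ univ.filter (fun j' : Fin n => j' ≤ j), (g j'.succ - g j'.castSucc) =
      g j.succ - g 0 := by
  obtain ⟨k, hk⟩ := j
  induction k with
  | zero =>
    have : univ.filter (fun j' : Fin n => j' ≤ ⟨0, hk⟩) = {⟨0, hk⟩} := by
      ext j'; simp [Fin.le_def, Fin.ext_iff]
    rw [this, Finset.sum_singleton]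
    rfl
  | succ k ih =>
    have : univ.filter (fun j' : Fin n => j' ≤ ⟨k + 1, hk⟩) =
        insert ⟨k + 1, hk⟩ (univ.filter (fun j' : Fin n => j' ≤ ⟨k, by omega⟩)) := by
      ext j'; simp [Fin.le_def, Fin.ext_iff]; omega
    rw [this, Finset.sum_insert (by simp), ih (by omega)]
    change _ - g ⟨k + 1, _⟩ + (g ⟨k + 1, _⟩ - _) = _
    ring

theorem sum_filter_lt_sub {n : ℕ} (g : Fin (n + 1) → ℤ) (j : Fin n) :
    ∑ j' ∈ univ.filter (fun j' : Fin n => j' < j), (g j'.succ - g j'.castSucc) =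
      g j.castSucc - g 0 := by
  have h := sum_filter_le_sub g j
  have : univ.filter (fun j' : Fin n => j' ≤ j) =
      insert j (univ.filter (fun j' : Fin n => j' < j)) := by
    ext j'; simp [le_iff_eq_or_lt]
  rw [this, Finset.sum_insert (by simp)] at h
  linarith

theorem sum_univ_sub {n : ℕ} (g : Fin (n + 1) → ℤ) :
    ∑ j : Fin n, (g j.succ - g j.castSucc) = g (Fin.last n) - g 0 := by
  rcases n with _ | n
  · simp
  · rw [← Fin.succ_last, ← sum_filter_le_sub g (Fin.last n)]
    congr 1
    ext j
    simp [Fin.le_last]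

/-- `h` and `v` are the tables of row and column partial sums of `A`. -/
def Encodes {n : ℕ} (A : Fin n → Fin n → ℤ) (h : Fin n → Fin (n + 1) → Bool)
    (v : Fin (n + 1) → Fin n → Bool) : Prop :=
  IsDomainWall h v ∧ (∀ i j, A i j = (h i j.succ).toNat - (h i j.castSucc).toNat) ∧
    ∀ i j, A i j = (v i.succ j).toNat - (v i.castSucc j).toNat

theorem Encodes.row_sum {n : ℕ} {A : Fin n → Fin n → ℤ} {h : Fin n → Fin (n + 1) → Bool}
    {v : Fin (n + 1) → Fin n → Bool} (H : Encodes A h v) (i j : Fin n) :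
    ∑ j' ∈ univ.filter (fun j' : Fin n => j' ≤ j), A i j' = (h i j.succ).toNat := by
  rw [Finset.sum_congr rfl fun j' _ => H.2.1 i j',
    sum_filter_le_sub (fun k => ((h i k).toNat : ℤ)), H.1.1]
  simp

theorem Encodes.col_sum {n : ℕ} {A : Fin n → Fin n → ℤ} {h : Fin n → Fin (n + 1) → Bool}
    {v : Fin (n + 1) → Fin n → Bool} (H : Encodes A h v) (i j : Fin n) :
    ∑ i' ∈ univ.filter (fun i' : Fin n => i' ≤ i), A i' j = (v i.succ j).toNat := by
  rw [Finset.sum_congr rfl fun i' _ => H.2.2 i' j,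
    sum_filter_le_sub (fun k => ((v k j).toNat : ℤ)), H.1.2.2.1]
  simp

theorem Encodes.col_sum_lt {n : ℕ} {A : Fin n → Fin n → ℤ} {h : Fin n → Fin (n + 1) → Bool}
    {v : Fin (n + 1) → Fin n → Bool} (H : Encodes A h v) (i j : Fin n) :
    ∑ i' ∈ univ.filter (fun i' : Fin n => i' < i), A i' j = (v i.castSucc j).toNat := by
  rw [Finset.sum_congr rfl fun i' _ => H.2.2 i' j,
    sum_filter_lt_sub (fun k => ((v k j).toNat : ℤ)), H.1.2.2.1]
  simp

theorem Encodes.isASM {n : ℕ} {A : Fin n → Fin n → ℤ} {h : Fin n → Fin (n + 1) → Bool}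
    {v : Fin (n + 1) → Fin n → Bool} (H : Encodes A h v) : IsASM A := by
  refine ⟨fun i j => ?_, fun i j => ?_, fun i j => ?_, fun i => ?_, fun j => ?_⟩
  · rw [H.2.1]
    cases h i j.succ <;> cases h i j.castSucc <;> simp
  · rw [H.row_sum]
    cases h i j.succ <;> simp
  · rw [H.col_sum]
    cases v i.succ j <;> simp
  · rw [Finset.sum_congr rfl fun j' _ => H.2.1 i j',
      sum_univ_sub (fun k => ((h i k).toNat : ℤ)), H.1.1, H.1.2.1]
    simp
  · rw [Finset.sum_congr rfl fun i' _ => H.2.2 i' j,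
      sum_univ_sub (fun k => ((v k j).toNat : ℤ)), H.1.2.2.1, H.1.2.2.2]
    simp

theorem Encodes.unique {n : ℕ} {A : Fin n → Fin n → ℤ} {h h' : Fin n → Fin (n + 1) → Bool}
    {v v' : Fin (n + 1) → Fin n → Bool} (H : Encodes A h v) (H' : Encodes A h' v') :
    h = h' ∧ v = v' := by
  have hinj : ∀ b b' : Bool, (b.toNat : ℤ) = b'.toNat → b = b' := by decide
  constructor
  · funext i k
    refine Fin.cases ?_ (fun j => ?_) k
    · rw [H.1.1, H'.1.1]
    · exact hinj _ _ (by rw [← H.row_sum, ← H'.row_sum])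
  · funext k j
    refine Fin.cases ?_ (fun i => ?_) k
    · rw [H.1.2.2.1, H'.1.2.2.1]
    · exact hinj _ _ (by rw [← H.col_sum, ← H'.col_sum])

theorem exists_partialSums {n : ℕ} (a : Fin n → ℤ)
    (ha : ∀ j, (∑ j' ∈ univ.filter (fun j' : Fin n => j' ≤ j), a j') = 0 ∨
      (∑ j' ∈ univ.filter (fun j' : Fin n => j' ≤ j), a j') = 1) (hs : ∑ j, a j = 1) :
    ∃ g : Fin (n + 1) → Bool, g 0 = false ∧ g (Fin.last n) = true ∧
      ∀ j, a j = (g j.succ).toNat - (g j.castSucc).toNat := by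
  have htN : ∀ z : ℤ, z = 0 ∨ z = 1 → ((decide (z = 1)).toNat : ℤ) = z := by
    rintro z (rfl | rfl) <;> simp
  have hsum : ∀ k : Fin (n + 1), (∑ j' ∈ univ.filter (fun j' : Fin n => j'.val < k.val), a j') = 0 ∨
      (∑ j' ∈ univ.filter (fun j' : Fin n => j'.val < k.val), a j') = 1 := by
    intro k
    refine Fin.cases ?_ (fun j => ?_) k
    · simp
    · simpa [Nat.lt_succ_iff] using ha j
  refine ⟨fun k => decide ((∑ j' ∈ univ.filter (fun j' : Fin n => j'.val < k.val), a j') = 1),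
    by simp, by simpa using hs, fun j => ?_⟩
  rw [htN _ (hsum _), htN _ (hsum _)]
  have : univ.filter (fun j' : Fin n => j'.val < j.succ.val) =
      insert j (univ.filter (fun j' : Fin n => j'.val < j.castSucc.val)) := by
    ext j'; simp [Fin.ext_iff]; omega
  rw [this, Finset.sum_insert (by simp)]
  ring

theorem IsASM.exists_encodes {n : ℕ} {A : Fin n → Fin n → ℤ} (H : IsASM A) :
    ∃ h v, Encodes A h v := by
  choose h h0 h1 hA using fun i => exists_partialSums (A i) (H.2.1 i) (H.2.2.2.1 i)
  choose v v0 v1 vA using fun j => exists_partialSums (fun i => A i j) (fun i => H.2.2.1 i j)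
    (H.2.2.2.2 j)
  exact ⟨h, fun k j => v j k, ⟨h0, h1, v0, v1⟩, hA, fun i j => vA j i⟩

theorem exists_jump_of_le {n : ℕ} (g : Fin (n + 1) → Bool) (k m : Fin (n + 1)) (hkm : k ≤ m)
    (hk : g k = false) (hm : g m = true) :
    ∃ j : Fin n, k ≤ j.castSucc ∧ j.succ ≤ m ∧ g j.castSucc = false ∧ g j.succ = true := by
  by_contra hne
  push Not at hne
  have : ∀ i : Fin (n + 1), k ≤ i → i ≤ m → g i = false := by
    intro i
    induction i using Fin.induction with
    | zero =>
      intro h _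
      rwa [← Fin.le_zero_iff.1 h]
    | succ i ih =>
      intro h1 h2
      rcases h1.eq_or_lt with rfl | h1
      · exact hk
      · have h3 : k ≤ i.castSucc := Fin.le_castSucc_iff.2 h1
        simpa using hne i h3 h2 (ih h3 (le_trans i.castSucc_le_succ h2))
  simp [this m hkm le_rfl] at hm

theorem zero_and_exists_gt_iff {n : ℕ} {B : Fin n → ℤ} {g : Fin (n + 1) → Bool}
    (h1 : g (Fin.last n) = true) (hg : ∀ j : Fin n, g j.castSucc ≤ g j.succ)
    (hB : ∀ j, B j = (g j.succ).toNat - (g j.castSucc).toNat) (j : Fin n) :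
    (B j = 0 ∧ ∃ j', j < j' ∧ B j' = 1) ↔ g j.succ = false := by
  have hmono : Monotone g := Fin.monotone_iff_le_succ.2 hg
  constructor
  · rintro ⟨-, j', hj, h⟩
    rw [hB] at h
    have h2 : g j.succ ≤ g j'.castSucc := hmono (by rwa [Fin.le_castSucc_iff, Fin.succ_lt_succ_iff])
    revert h h2
    cases g j.succ <;> cases g j'.castSucc <;> cases g j'.succ <;> simp
  · intro h
    have h2 := hg j
    refine ⟨?_, ?_⟩
    · rw [hB]
      revert h h2
      cases g j.succ <;> cases g j.castSucc <;> simp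
    · obtain ⟨j', h3, -, h4, h5⟩ := exists_jump_of_le g _ _ (Fin.le_last _) h h1
      refine ⟨j', ?_, by rw [hB, h4, h5]; rfl⟩
      rwa [Fin.le_castSucc_iff, Fin.succ_lt_succ_iff] at h3

theorem zero_and_exists_lt_iff {n : ℕ} {B : Fin n → ℤ} {g : Fin (n + 1) → Bool}
    (h0 : g 0 = false) (hg : ∀ j : Fin n, g j.castSucc ≤ g j.succ)
    (hB : ∀ j, B j = (g j.succ).toNat - (g j.castSucc).toNat) (j : Fin n) :
    (B j = 0 ∧ ∃ j', j' < j ∧ B j' = 1) ↔ g j.castSucc = true := by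
  have hmono : Monotone g := Fin.monotone_iff_le_succ.2 hg
  constructor
  · rintro ⟨-, j', hj, h⟩
    rw [hB] at h
    have h2 : g j'.succ ≤ g j.castSucc := hmono (by rwa [Fin.le_castSucc_iff, Fin.succ_lt_succ_iff])
    revert h h2
    cases g j.castSucc <;> cases g j'.castSucc <;> cases g j'.succ <;> simp
  · intro h
    have h2 := hg j
    refine ⟨?_, ?_⟩
    · rw [hB]
      revert h h2
      cases g j.succ <;> cases g j.castSucc <;> simp
    · obtain ⟨j', -, h3, h4, h5⟩ := exists_jump_of_le g _ _ (Fin.zero_le _) h0 h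
      refine ⟨j', ?_, by rw [hB, h4, h5]; rfl⟩
      rwa [Fin.le_castSucc_iff, Fin.succ_lt_succ_iff] at h3

theorem sum_sum_ite_and_eq_card {n : ℕ} (q : Fin n → Prop) [DecidablePred q]
    (p : Fin n → Fin n → Prop) [∀ i j, Decidable (p i j)] (c : Fin n → Fin n)
    (hq : ∀ i j, q i ↔ i = c j) :
    ∑ i, ∑ j, (if q i ∧ p i j then 1 else 0) = (univ.filter fun j => p (c j) j).card := by
  rw [Finset.card_filter, Finset.sum_comm]
  refine Finset.sum_congr rfl fun j _ => ?_
  rw [Finset.sum_eq_single (c j)]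
  · simp [hq _ j]
  · intro i _ hi
    simp [hq i j, hi]
  · simp

theorem Encodes.ice {n : ℕ} {A : Fin n → Fin n → ℤ} {h : Fin n → Fin (n + 1) → Bool}
    {v : Fin (n + 1) → Fin n → Bool} (H : Encodes A h v) (i j : Fin n) :
    (h i j.succ).toNat + (v i.castSucc j).toNat =
      (h i j.castSucc).toNat + (v i.succ j).toNat := by
  have h1 := H.2.1 i j
  have h2 := H.2.2 i j
  omega

theorem Encodes.nuASM_eq {n : ℕ} {A : Fin n → Fin n → ℤ} {h : Fin n → Fin (n + 1) → Bool}
    {v : Fin (n + 1) → Fin n → Bool} (H : Encodes A h v) :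
    nuASM A = ∑ i : Fin n, ∑ j : Fin n, if v i.castSucc j = true ∧ h i j.succ = true then 1 else 0 := by
  have key : (∑ i : Fin n, ∑ i' : Fin n, ∑ j : Fin n, ∑ j' : Fin n,
      if i < i' ∧ j' ≤ j then A i j * A i' j' else 0) =
      ∑ i', ∑ j, ((v i'.castSucc j).toNat : ℤ) * (h i' j.succ).toNat := by
    rw [Finset.sum_comm]
    refine Finset.sum_congr rfl fun i' _ => ?_
    rw [Finset.sum_comm]
    refine Finset.sum_congr rfl fun j _ => ?_
    rw [← H.row_sum, ← H.col_sum_lt, Finset.sum_filter, Finset.sum_filter, Finset.sum_mul_sum]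
    refine Finset.sum_congr rfl fun i _ => Finset.sum_congr rfl fun j' _ => ?_
    by_cases h1 : i < i' <;> by_cases h2 : j' ≤ j <;> simp [h1, h2]
  rw [nuASM, key, ← Int.toNat_natCast (∑ i, ∑ j, _)]
  congr 1
  push_cast
  refine Finset.sum_congr rfl fun i _ => Finset.sum_congr rfl fun j _ => ?_
  cases v i.castSucc j <;> cases h i j.succ <;> simp

theorem Encodes.muASM_eq {n : ℕ} {A : Fin n → Fin n → ℤ} {h : Fin n → Fin (n + 1) → Bool}
    {v : Fin (n + 1) → Fin n → Bool} (H : Encodes A h v) :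
    muASM A = ∑ i : Fin n, ∑ j : Fin n, if h i j.castSucc = true ∧ h i j.succ = false then 1 else 0 := by
  rw [muASM, Finset.card_filter, Fintype.sum_prod_type]
  refine Finset.sum_congr rfl fun i _ => Finset.sum_congr rfl fun j _ => ?_
  simp only [H.2.1]
  cases h i j.castSucc <;> cases h i j.succ <;> simp

theorem bool_le_of_ice_left {l u r d : Bool} (h : r.toNat + u.toNat = l.toNat + d.toNat)
    (hu : u = false ∨ d = true) : l ≤ r := by
  revert l u r d; decide

theorem bool_le_of_ice_top {l u r d : Bool} (h : r.toNat + u.toNat = l.toNat + d.toNat)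
    (hu : l = false ∨ r = true) : u ≤ d := by
  revert l u r d; decide

theorem Encodes.rhoT_eq {n : ℕ} {A : Fin n → Fin n → ℤ} {h : Fin n → Fin (n + 1) → Bool}
    {v : Fin (n + 1) → Fin n → Bool} (H : Encodes A h v) :
    rhoT A = ∑ i : Fin n, ∑ j : Fin n, if i.val = 0 ∧ h i j.succ = false then 1 else 0 := by
  rw [sum_sum_ite_and_eq_card (fun i : Fin n => i.val = 0) (fun i j => h i j.succ = false)
    (fun j => ⟨0, j.pos⟩) (fun i j => by simp [Fin.ext_iff]), rhoT]
  congr 1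
  refine Finset.filter_congr fun j _ => ?_
  refine zero_and_exists_gt_iff (H.1.2.1 _) (fun k => bool_le_of_ice_left (H.ice _ k) (.inl ?_))
    (H.2.1 _) j
  exact H.1.2.2.1 k

theorem Encodes.rhoB_eq {n : ℕ} {A : Fin n → Fin n → ℤ} {h : Fin n → Fin (n + 1) → Bool}
    {v : Fin (n + 1) → Fin n → Bool} (H : Encodes A h v) :
    rhoB A = ∑ i : Fin n, ∑ j : Fin n, if i.val + 1 = n ∧ h i j.castSucc = true then 1 else 0 := by
  rw [sum_sum_ite_and_eq_card (fun i : Fin n => i.val + 1 = n) (fun i j => h i j.castSucc = true)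
    (fun j => ⟨n - 1, Nat.sub_lt j.pos Nat.one_pos⟩)
    (fun i j => by simp [Fin.ext_iff]; omega), rhoB]
  congr 1
  refine Finset.filter_congr fun j _ => ?_
  refine zero_and_exists_lt_iff (H.1.1 _) (fun k => bool_le_of_ice_left (H.ice _ k) (.inr ?_))
    (H.2.1 _) j
  rw [← H.1.2.2.2 k]
  congr 1
  ext
  have := j.pos
  simp
  omega

theorem Encodes.rhoL_eq {n : ℕ} {A : Fin n → Fin n → ℤ} {h : Fin n → Fin (n + 1) → Bool}
    {v : Fin (n + 1) → Fin n → Bool} (H : Encodes A h v) :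
    rhoL A = ∑ i : Fin n, ∑ j : Fin n, if j.val = 0 ∧ v i.succ j = false then 1 else 0 := by
  rw [Finset.sum_comm, sum_sum_ite_and_eq_card (fun j : Fin n => j.val = 0)
    (fun j i => v i.succ j = false)
    (fun j => ⟨0, j.pos⟩) (fun i j => by simp [Fin.ext_iff]), rhoL]
  congr 1
  refine Finset.filter_congr fun i _ => ?_
  refine zero_and_exists_gt_iff (B := fun i' => A i' ⟨0, i.pos⟩) (g := fun k => v k ⟨0, i.pos⟩)
    (H.1.2.2.2 _) (fun k => bool_le_of_ice_top (H.ice k _) (.inl ?_))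
    (fun k => H.2.2 k _) i
  exact H.1.1 k

theorem Encodes.rhoR_eq {n : ℕ} {A : Fin n → Fin n → ℤ} {h : Fin n → Fin (n + 1) → Bool}
    {v : Fin (n + 1) → Fin n → Bool} (H : Encodes A h v) :
    rhoR A = ∑ i : Fin n, ∑ j : Fin n, if j.val + 1 = n ∧ v i.castSucc j = true then 1 else 0 := by
  rw [Finset.sum_comm, sum_sum_ite_and_eq_card (fun j : Fin n => j.val + 1 = n)
    (fun j i => v i.castSucc j = true)
    (fun j => ⟨n - 1, Nat.sub_lt j.pos Nat.one_pos⟩)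
    (fun i j => by simp [Fin.ext_iff]; omega), rhoR]
  congr 1
  refine Finset.filter_congr fun i _ => ?_
  have hn := i.pos
  refine zero_and_exists_lt_iff (B := fun i' => A i' ⟨n - 1, Nat.sub_lt i.pos Nat.one_pos⟩)
    (g := fun k => v k ⟨n - 1, Nat.sub_lt i.pos Nat.one_pos⟩)
    (H.1.2.2.1 _) (fun k => bool_le_of_ice_top (H.ice k _) (.inr ?_))
    (fun k => H.2.2 k _) i
  rw [← H.1.2.1 k]
  congr 1
  ext
  simp
  omega

/-- Vertex weights whose lattice sum is `Zqua`. -/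
def quaWeight {R : Type*} [CommRing R] (n : ℕ) (x y z1 z2 z3 z4 : R) (i j : Fin n) :
    Bool → Bool → Bool → Bool → R :=
  vertexWeight ((if i.val = 0 then z1 else 1) * (if j.val = 0 then z4 else 1))
    (x * ((if j.val + 1 = n then z2 else 1) * (if i.val + 1 = n then z3 else 1))) 1 1 1 y

theorem quaWeight_eq_prod {R : Type*} [CommRing R] {n : ℕ} (x y z1 z2 z3 z4 : R) (i j : Fin n)
    {l u r d : Bool} (hice : r.toNat + u.toNat = l.toNat + d.toNat) (ht : i.val = 0 → u = false)
    (hl : j.val = 0 → l = false) (hb : i.val + 1 = n → d = true) (hr : j.val + 1 = n → r = true) :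
    quaWeight n x y z1 z2 z3 z4 i j l u r d =
      x ^ (if u = true ∧ r = true then 1 else 0) * y ^ (if l = true ∧ r = false then 1 else 0) *
      z1 ^ (if i.val = 0 ∧ r = false then 1 else 0) *
      z2 ^ (if j.val + 1 = n ∧ u = true then 1 else 0) *
      z3 ^ (if i.val + 1 = n ∧ l = true then 1 else 0) *
      z4 ^ (if j.val = 0 ∧ d = false then 1 else 0) := by
  unfold quaWeight
  revert hice ht hl hb hr
  cases l <;> cases u <;> cases r <;> cases d <;> simp +contextual [vertexWeight] <;>
    intros <;> split_ifs <;> simp [mul_assoc]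

theorem Encodes.weight_eq {R : Type*} [CommRing R] {n : ℕ} (x y z1 z2 z3 z4 : R)
    {A : Fin n → Fin n → ℤ} {h : Fin n → Fin (n + 1) → Bool}
    {v : Fin (n + 1) → Fin n → Bool} (H : Encodes A h v) :
    x ^ nuASM A * y ^ muASM A * z1 ^ rhoT A * z2 ^ rhoR A * z3 ^ rhoB A * z4 ^ rhoL A =
      configWeight (quaWeight n x y z1 z2 z3 z4) h v := by
  rw [H.nuASM_eq, H.muASM_eq, H.rhoT_eq, H.rhoR_eq, H.rhoB_eq, H.rhoL_eq]
  simp only [← Finset.prod_pow_eq_pow_sum, ← Finset.prod_mul_distrib (M := R)]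
  refine Finset.prod_congr rfl fun i _ => Finset.prod_congr rfl fun j _ => ?_
  rw [quaWeight_eq_prod _ _ _ _ _ _ _ _ (H.ice i j)]
  · exact fun hi => (congrArg (v · j) (Fin.ext hi)).trans (H.1.2.2.1 j)
  · exact fun hj => (congrArg (h i) (Fin.ext hj)).trans (H.1.1 i)
  · exact fun hi => (congrArg (v · j) (Fin.ext hi)).trans (H.1.2.2.2 j)
  · exact fun hj => (congrArg (h i) (Fin.ext hj)).trans (H.1.2.1 i)

theorem iceSupported_quaWeight {R : Type*} [CommRing R] (n : ℕ) (x y z1 z2 z3 z4 : R) :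
    IceSupported (quaWeight n x y z1 z2 z3 z4) := fun _ _ _ _ _ _ h =>
  vertexWeight_eq_zero _ _ _ _ _ _ _ _ _ _ h

theorem asmMat_injective {n : ℕ} : Function.Injective (asmMat (n := n)) := by
  intro e e' h
  funext i j
  have := congrFun (congrFun h i) j
  simp only [asmMat] at this
  exact Fin.ext (by omega)

theorem exists_encodes_of_ice {n : ℕ} {h : Fin n → Fin (n + 1) → Bool}
    {v : Fin (n + 1) → Fin n → Bool} (hb : IsDomainWall h v)
    (hice : ∀ i j, (h i j.succ).toNat + (v i.castSucc j).toNat =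
      (h i j.castSucc).toNat + (v i.succ j).toNat) :
    ∃ e : Fin n → Fin n → Fin 3, Encodes (asmMat e) h v := by
  have key : ∀ b b' : Bool, ∃ k : Fin 3, ((k : ℕ) : ℤ) - 1 = (b.toNat : ℤ) - b'.toNat := by decide
  choose k hk using key
  refine ⟨fun i j => k (h i j.succ) (h i j.castSucc), hb, fun i j => hk _ _, fun i j => ?_⟩
  have h1 := hk (h i j.succ) (h i j.castSucc)
  have h2 := hice i j
  simp only [asmMat]
  omega

theorem Zqua_eq_latticeSum {R : Type*} [CommRing R] (n : ℕ) (x y z1 z2 z3 z4 : R) :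
    Zqua n x y z1 z2 z3 z4 = latticeSum (quaWeight n x y z1 z2 z3 z4) := by
  classical
  rw [Zqua, latticeSum, ← Fintype.sum_prod_type']
  trans ∑ e : Fin n → Fin n → Fin 3,
    ∑ p : (Fin n → Fin (n + 1) → Bool) × (Fin (n + 1) → Fin n → Bool),
      if Encodes (asmMat e) p.1 p.2 then
        configWeight (quaWeight n x y z1 z2 z3 z4) p.1 p.2 else 0
  · refine Finset.sum_congr rfl fun e _ => ?_
    split_ifs with he
    · obtain ⟨h, v, H⟩ := he.exists_encodes
      rw [Finset.sum_eq_single (h, v), if_pos H, H.weight_eq]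
      · rintro ⟨h', v'⟩ - hne
        refine if_neg fun H' => hne ?_
        obtain ⟨rfl, rfl⟩ := H.unique H'
        rfl
      · simp
    · exact (Finset.sum_eq_zero fun p _ => if_neg fun H => he H.isASM).symm
  · rw [Finset.sum_comm]
    refine Finset.sum_congr rfl fun p _ => ?_
    by_cases hw : IsDomainWall p.1 p.2 ∧ configWeight (quaWeight n x y z1 z2 z3 z4) p.1 p.2 ≠ 0
    · obtain ⟨e, he⟩ := exists_encodes_of_ice hw.1
        (ice_of_configWeight_ne_zero (iceSupported_quaWeight _ _ _ _ _ _ _) hw.2)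
      rw [Finset.sum_eq_single e, if_pos he, if_pos hw.1]
      · intro e' _ hne
        refine if_neg fun H' => hne (asmMat_injective (funext fun i => funext fun j => ?_))
        rw [H'.2.1, he.2.1]
      · simp
    · trans 0
      · refine Finset.sum_eq_zero fun e _ => ite_eq_right_iff.2 fun H => ?_
        by_contra h0
        exact hw ⟨H.1, h0⟩
      · refine (ite_eq_right_iff.2 fun H => ?_).symm
        by_contra h0
        exact hw ⟨H, h0⟩

theorem Zqua_map {R S : Type*} [CommRing R] [CommRing S] (φ : R →+* S) (n : ℕ)
    (x y z1 z2 z3 z4 : R) :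
    φ (Zqua n x y z1 z2 z3 z4) = Zqua n (φ x) (φ y) (φ z1) (φ z2) (φ z3) (φ z4) := by
  rw [Zqua, Zqua, map_sum]
  refine Finset.sum_congr rfl fun e _ => ?_
  split_ifs <;> simp

theorem sum_rows_eq {n : ℕ} {h : Fin n → Fin (n + 1) → Bool} {v : Fin (n + 1) → Fin n → Bool}
    (hb : IsDomainWall h v) (hice : ∀ i j, (h i j.succ).toNat + (v i.castSucc j).toNat =
      (h i j.castSucc).toNat + (v i.succ j).toNat) (k : Fin (n + 1)) :
    ∑ i, ((h i k).toNat : ℤ) = k := by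
  induction k using Fin.induction with
  | zero => simp [hb.1]
  | succ j ih =>
    have h1 : ∀ i, ((h i j.succ).toNat : ℤ) = (h i j.castSucc).toNat +
        ((v i.succ j).toNat - (v i.castSucc j).toNat) := fun i => by
      have := hice i j
      omega
    rw [Finset.sum_congr rfl fun i _ => h1 i, Finset.sum_add_distrib, ih,
      sum_univ_sub (fun k => ((v k j).toNat : ℤ)), hb.2.2.1, hb.2.2.2]
    simp

theorem sum_cols_eq {n : ℕ} {h : Fin n → Fin (n + 1) → Bool} {v : Fin (n + 1) → Fin n → Bool}
    (hb : IsDomainWall h v) (hice : ∀ i j, (h i j.succ).toNat + (v i.castSucc j).toNat =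
      (h i j.castSucc).toNat + (v i.succ j).toNat) (k : Fin (n + 1)) :
    ∑ j, ((v k j).toNat : ℤ) = k := by
  induction k using Fin.induction with
  | zero => simp [hb.2.2.1]
  | succ i ih =>
    have h1 : ∀ j, ((v i.succ j).toNat : ℤ) = (v i.castSucc j).toNat +
        ((h i j.succ).toNat - (h i j.castSucc).toNat) := fun j => by
      have := hice i j
      omega
    rw [Finset.sum_congr rfl fun i _ => h1 i, Finset.sum_add_distrib, ih,
      sum_univ_sub (fun k => ((h i k).toNat : ℤ)), hb.1, hb.2.1]
    simp

theorem sum_one_sub_eq_zero {n : ℕ} {h : Fin n → Fin (n + 1) → Bool}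
    {v : Fin (n + 1) → Fin n → Bool} (hb : IsDomainWall h v)
    (hice : ∀ i j, (h i j.succ).toNat + (v i.castSucc j).toNat =
      (h i j.castSucc).toNat + (v i.succ j).toNat) :
    ∑ i, ∑ j, (1 - ((h i j.succ).toNat : ℤ) - (v i.castSucc j).toNat) = 0 := by
  simp only [Finset.sum_sub_distrib]
  rw [Finset.sum_comm (f := fun i j => ((h i (Fin.succ j)).toNat : ℤ))]
  simp only [sum_rows_eq hb hice, sum_cols_eq hb hice]
  have key : ∑ i : Fin n, (i.val : ℤ) = ∑ i : Fin n, ((n : ℤ) - 1 - i.val) := by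
    rw [← Equiv.sum_comp Fin.revPerm]
    refine Finset.sum_congr rfl fun i _ => ?_
    have := i.isLt
    simp only [Fin.revPerm_apply, Fin.val_rev]
    omega
  simp only [Finset.sum_sub_distrib, Finset.sum_const, Finset.card_univ, Fintype.card_fin,
    nsmul_eq_mul, mul_one] at key
  simp only [Fin.val_succ, Fin.val_castSucc, Nat.cast_add, Nat.cast_one, Finset.sum_add_distrib,
    Finset.sum_const, Finset.card_univ, Fintype.card_fin, nsmul_eq_mul, mul_one]
  linear_combination -key

theorem latticeSum_gauge {K : Type*} [Field K] {n : ℕ}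
    {ω : Fin n → Fin n → Bool → Bool → Bool → Bool → K} (hω : IceSupported ω) (f g : Fin n → K)
    (γ : K) (hf : ∀ i, f i ≠ 0) (hg : ∀ j, g j ≠ 0) (hγ : γ ≠ 0) :
    latticeSum (fun i j l u r d =>
      vertexWeight γ γ⁻¹ 1 1 (f i * g j) (f i * g j)⁻¹ l u r d * ω i j l u r d) =
      (∏ i, f i) * (∏ j, g j) * latticeSum ω := by
  simp only [latticeSum, Finset.mul_sum]
  refine Finset.sum_congr rfl fun h _ => Finset.sum_congr rfl fun v _ => ?_
  split_ifs with hb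
  swap
  · simp
  have hsplit : configWeight (fun i j l u r d =>
      vertexWeight γ γ⁻¹ 1 1 (f i * g j) (f i * g j)⁻¹ l u r d * ω i j l u r d) h v =
      configWeight (fun i j => vertexWeight γ γ⁻¹ 1 1 (f i * g j) (f i * g j)⁻¹) h v *
        configWeight ω h v := by
    simp only [configWeight, Finset.prod_mul_distrib]
  rw [hsplit]
  by_cases hne : configWeight ω h v = 0
  · rw [hne, mul_zero, mul_zero]
  have hice := ice_of_configWeight_ne_zero hω hne
  congr 1
  have hvert : ∀ i j, vertexWeight γ γ⁻¹ 1 1 (f i * g j) (f i * g j)⁻¹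
      (h i j.castSucc) (v i.castSucc j) (h i j.succ) (v i.succ j) =
      γ ^ (1 - ((h i j.succ).toNat : ℤ) - (v i.castSucc j).toNat) *
      (f i ^ (((h i j.succ).toNat : ℤ) - (h i j.castSucc).toNat) *
        g j ^ (((v i.succ j).toNat : ℤ) - (v i.castSucc j).toNat)) := by
    intro i j
    have := hice i j
    revert this
    cases h i j.castSucc <;> cases v i.castSucc j <;> cases h i j.succ <;> cases v i.succ j <;>
      simp [vertexWeight, mul_comm]
  have hzp : ∀ (a : K), a ≠ 0 → ∀ e : Fin n → ℤ, ∏ i, a ^ e i = a ^ ∑ i, e i := by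
    intro a ha e
    induction (univ : Finset (Fin n)) using Finset.induction_on with
    | empty => simp
    | insert i s hi ih => rw [Finset.prod_insert hi, Finset.sum_insert hi, ih, zpow_add₀ ha]
  simp only [configWeight, hvert, Finset.prod_mul_distrib]
  rw [Finset.prod_comm (f := fun i j => g j ^ (((v (Fin.succ i) j).toNat : ℤ) -
    (v (Fin.castSucc i) j).toNat))]
  have hH : ∀ i, ∑ j : Fin n, (((h i j.succ).toNat : ℤ) - (h i j.castSucc).toNat) = 1 := fun i => by
    rw [sum_univ_sub (fun k => ((h i k).toNat : ℤ)), hb.1, hb.2.1]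
    rfl
  have hV : ∀ j, ∑ i : Fin n, (((v i.succ j).toNat : ℤ) - (v i.castSucc j).toNat) = 1 := fun j => by
    rw [sum_univ_sub (fun k => ((v k j).toNat : ℤ)), hb.2.2.1, hb.2.2.2]
    rfl
  simp only [hzp _ hγ, hzp _ (hf _), hzp _ (hg _), hH, hV, sum_one_sub_eq_zero hb hice]
  simp

theorem latticeSum_add_of_vertex {R : Type*} [CommRing R] {n : ℕ}
    {ω ω₁ ω₂ : Fin n → Fin n → Bool → Bool → Bool → Bool → R} (i₀ j₀ : Fin n) (k₁ k₂ : R)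
    (h₀ : ∀ l u r d, ω i₀ j₀ l u r d = k₁ * ω₁ i₀ j₀ l u r d + k₂ * ω₂ i₀ j₀ l u r d)
    (h₁ : ∀ i j, ¬(i = i₀ ∧ j = j₀) → ω₁ i j = ω i j)
    (h₂ : ∀ i j, ¬(i = i₀ ∧ j = j₀) → ω₂ i j = ω i j) :
    latticeSum ω = k₁ * latticeSum ω₁ + k₂ * latticeSum ω₂ := by
  simp only [latticeSum, Finset.mul_sum, ← Finset.sum_add_distrib]
  refine Finset.sum_congr rfl fun h _ => Finset.sum_congr rfl fun v _ => ?_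
  split_ifs
  swap
  · simp
  simp only [configWeight, ← Fintype.prod_prod_type']
  rw [← Finset.mul_prod_erase _ _ (Finset.mem_univ (i₀, j₀)),
    ← Finset.mul_prod_erase _ _ (Finset.mem_univ (i₀, j₀)),
    ← Finset.mul_prod_erase _ _ (Finset.mem_univ (i₀, j₀))]
  have e : ∀ p : Fin n × Fin n, p ∈ univ.erase (i₀, j₀) → ¬(p.1 = i₀ ∧ p.2 = j₀) := by
    rintro ⟨i, j⟩ hp ⟨rfl, rfl⟩
    simp at hp
  have e₁ : ∏ p ∈ univ.erase (i₀, j₀), ω₁ p.1 p.2 (h p.1 p.2.castSucc) (v p.1.castSucc p.2)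
      (h p.1 p.2.succ) (v p.1.succ p.2) = ∏ p ∈ univ.erase (i₀, j₀), ω p.1 p.2
        (h p.1 p.2.castSucc) (v p.1.castSucc p.2) (h p.1 p.2.succ) (v p.1.succ p.2) :=
    Finset.prod_congr rfl fun p hp => by rw [h₁ _ _ (e p hp)]
  have e₂ : ∏ p ∈ univ.erase (i₀, j₀), ω₂ p.1 p.2 (h p.1 p.2.castSucc) (v p.1.castSucc p.2)
      (h p.1 p.2.succ) (v p.1.succ p.2) = ∏ p ∈ univ.erase (i₀, j₀), ω p.1 p.2
        (h p.1 p.2.castSucc) (v p.1.castSucc p.2) (h p.1 p.2.succ) (v p.1.succ p.2) :=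
    Finset.prod_congr rfl fun p hp => by rw [h₂ _ _ (e p hp)]
  rw [e₁, e₂]
  simp only [h₀]
  ring

theorem Zqua_rotate {K : Type*} [Field K] (n : ℕ) (x y z1 z2 z3 z4 : K) (hx : x ≠ 0) :
    Zqua n x y z1 z2 z3 z4 = Zqua n x y z3 z4 z1 z2 := by
  rw [Zqua_eq_latticeSum, Zqua_eq_latticeSum, latticeSum_reflect, latticeSum_transpose,
    latticeSum_reflect, latticeSum_transpose]
  have h := latticeSum_gauge (iceSupported_quaWeight n x y z3 z4 z1 z2) (fun _ => 1) (fun _ => 1)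
    x (by simp) (by simp) hx
  simp only [Finset.prod_const_one, one_mul] at h
  rw [← h]
  congr 1
  funext i j l u r d
  have e1 : ∀ i : Fin n, i.rev.val = 0 ↔ i.val + 1 = n := fun i => by
    have := i.isLt
    rw [Fin.val_rev]; omega
  have e2 : ∀ i : Fin n, i.rev.val + 1 = n ↔ i.val = 0 := fun i => by
    have := i.isLt
    rw [Fin.val_rev]; omega
  simp only [quaWeight, e1, e2]
  cases l <;> cases u <;> cases r <;> cases d <;> simp [vertexWeight, mul_comm, hx]

/-- The vertex weights of `Ztri`, with extra factors at two corners: `k1` when the top left entry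
is `0`, and `k2` when the bottom left entry is `0`. -/
def triWeight {R : Type*} [CommRing R] (n : ℕ) (x y z1 z2 z3 k1 k2 : R) (i j : Fin n) :
    Bool → Bool → Bool → Bool → R :=
  vertexWeight ((if i.val = 0 then z1 else 1) * (if j.val = 0 then z3 else 1) *
      (if i.val = 0 ∧ j.val = 0 then k1 else 1))
    (x * (if i.val + 1 = n then z2 else 1)) (if i.val + 1 = n ∧ j.val = 0 then k2 else 1) 1 1 y

/-- The lattice sum with the weights `triWeight`. -/
def triSum {R : Type*} [CommRing R] (n : ℕ) (x y z1 z2 z3 k1 k2 : R) : R :=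
  latticeSum (triWeight n x y z1 z2 z3 k1 k2)

theorem iceSupported_triWeight {R : Type*} [CommRing R] (n : ℕ) (x y z1 z2 z3 k1 k2 : R) :
    IceSupported (triWeight n x y z1 z2 z3 k1 k2) := fun _ _ _ _ _ _ h =>
  vertexWeight_eq_zero _ _ _ _ _ _ _ _ _ _ h

theorem triSum_one_one {R : Type*} [CommRing R] (n : ℕ) (x y z1 z2 z3 : R) :
    triSum n x y z1 z2 z3 1 1 = Zqua n x y z1 1 z2 z3 := by
  rw [Zqua_eq_latticeSum, triSum]
  congr 1
  funext i j
  simp [quaWeight, triWeight]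

theorem triSum_eq_add_top {R : Type*} [CommRing R] (m : ℕ) (x y z1 z2 z3 k1 k2 : R) :
    triSum (m + 2) x y z1 z2 z3 k1 k2 =
      k1 * triSum (m + 2) x y z1 z2 z3 1 k2 + (1 - k1) * triSum (m + 2) x y z1 z2 z3 0 k2 := by
  refine latticeSum_add_of_vertex 0 0 k1 (1 - k1) (fun l u r d => ?_) (fun i j hij => ?_)
    (fun i j hij => ?_)
  · cases l <;> cases u <;> cases r <;> cases d <;> simp [triWeight, vertexWeight] <;> ring
  · have : ¬(i.val = 0 ∧ j.val = 0) := fun h => hij ⟨Fin.ext h.1, Fin.ext h.2⟩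
    simp only [triWeight, if_neg this]
  · have : ¬(i.val = 0 ∧ j.val = 0) := fun h => hij ⟨Fin.ext h.1, Fin.ext h.2⟩
    simp only [triWeight, if_neg this]

theorem triSum_eq_add_bottom {R : Type*} [CommRing R] (m : ℕ) (x y z1 z2 z3 k1 k2 : R) :
    triSum (m + 2) x y z1 z2 z3 k1 k2 =
      k2 * triSum (m + 2) x y z1 z2 z3 k1 1 + (1 - k2) * triSum (m + 2) x y z1 z2 z3 k1 0 := by
  refine latticeSum_add_of_vertex (Fin.last _) 0 k2 (1 - k2) (fun l u r d => ?_) (fun i j hij => ?_)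
    (fun i j hij => ?_)
  · cases l <;> cases u <;> cases r <;> cases d <;> simp [triWeight, vertexWeight] <;> ring
  · have : ¬(i.val + 1 = m + 2 ∧ j.val = 0) := fun h =>
      hij ⟨Fin.ext (Nat.succ_injective h.1), Fin.ext h.2⟩
    simp only [triWeight, if_neg this]
  · have : ¬(i.val + 1 = m + 2 ∧ j.val = 0) := fun h =>
      hij ⟨Fin.ext (Nat.succ_injective h.1), Fin.ext h.2⟩
    simp only [triWeight, if_neg this]

theorem triSum_zero_top {R : Type*} [CommRing R] (m : ℕ) (x y z1 z2 z3 k2 : R) :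
    triSum (m + 2) x y z1 z2 z3 0 k2 = k2 * Zqua (m + 1) x y 1 1 z2 1 := by
  rw [triSum, latticeSum_eq_of_corner _ (iceSupported_triWeight _ _ _ _ _ _ _ _), Zqua_eq_latticeSum]
  · congr 1
    · have e : ∀ i : Fin (m + 1), i.val = m ↔ i = Fin.last m := fun i => by simp [Fin.ext_iff]
      simp [triWeight, vertexWeight, e]
    · congr 1
      funext i j
      simp [triWeight, quaWeight]
  · rintro (_ | _) <;> simp [triWeight, vertexWeight]

theorem triSum_zero_bottom {R : Type*} [CommRing R] (m : ℕ) (x y z1 z2 z3 : R) :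
    triSum (m + 2) x y z1 z2 z3 1 0 =
      z1 * (x * z2 * z3) ^ (m + 1) * Zqua (m + 1) x y z1 1 1 1 := by
  rw [triSum, latticeSum_reflect, latticeSum_eq_of_corner, Zqua_eq_latticeSum,
    latticeSum_reflect (quaWeight (m + 1) x y z1 1 1 1)]
  · congr 1
    · have e : ∏ i : Fin (m + 1), (if m - i.val = 0 then z1 * z3 else z3) =
          z1 * z3 * z3 ^ m := by
        rw [Fin.prod_univ_castSucc, Finset.prod_congr rfl fun (i : Fin m) _ =>
          if_neg (by have := i.isLt; simp only [Fin.val_castSucc]; omega)]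
        simp [mul_comm]
      simp [triWeight, vertexWeight, Fin.val_rev]
      rw [e]
      ring
    · refine latticeSum_congr fun i j l u r d _ _ h3 h4 => ?_
      have e : ¬ m - i.val = m + 1 := by omega
      simp [triWeight, quaWeight, Fin.val_rev, e]
  · intro i j l u r d h
    refine iceSupported_triWeight _ _ _ _ _ _ _ _ _ _ _ _ _ _ ?_
    revert h
    cases l <;> cases u <;> cases r <;> cases d <;> simp
  · rintro (_ | _) <;> simp [triWeight, vertexWeight]

theorem triSum_eq {R : Type*} [CommRing R] (m : ℕ) (x y z1 z2 z3 k1 k2 : R) :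
    triSum (m + 2) x y z1 z2 z3 k1 k2 =
      k1 * k2 * Zqua (m + 2) x y z1 1 z2 z3 + k2 * (1 - k1) * Zqua (m + 1) x y 1 1 z2 1 +
        k1 * (1 - k2) * (z1 * (x * z2 * z3) ^ (m + 1) * Zqua (m + 1) x y z1 1 1 1) := by
  rw [triSum_eq_add_top, triSum_zero_top, triSum_eq_add_bottom, triSum_one_one, triSum_zero_bottom]
  ring

theorem latticeSum_mul {R : Type*} [CommRing R] {n : ℕ} (ρ : Fin n → Fin n → R)
    (ω : Fin n → Fin n → Bool → Bool → Bool → Bool → R) :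
    latticeSum (fun i j l u r d => ρ i j * ω i j l u r d) = (∏ i, ∏ j, ρ i j) * latticeSum ω := by
  simp only [latticeSum, Finset.mul_sum, mul_ite, mul_zero, configWeight, Finset.prod_mul_distrib]

theorem partitionFunction_eq_normalized {K : Type*} [Field K] {k : ℕ} (s α : K)
    (X Y β η : Fin (k + 1) → K) (hs : s ^ 2 - 1 ≠ 0) (hα : α ≠ 0) (hβ : ∀ i, β i ≠ 0)
    (hη : ∀ j, η j ≠ 0) :
    partitionFunction s X Y = (s ^ 2 - 1) ^ (k + 1) * ((∏ i, β i) * ∏ j, η j) ^ k *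
      latticeSum fun i j => vertexWeight ((s ^ 2 * (X i * Y j) - 1) / (β i * η j * α))
        ((s ^ 2 * (X i * Y j) - 1) * α / (β i * η j)) (s * (X i * Y j - 1) / (β i * η j))
        (s * (X i * Y j - 1) / (β i * η j)) 1
        ((s ^ 2 - 1) ^ 2 * (X i * Y j) / (β i * η j) ^ 2) := by
  have hice : IceSupported fun i j l u r d =>
      (β i * η j)⁻¹ * sixVertexWeight s (X i * Y j) l u r d := fun i j l u r d h => by
    have h0 : sixVertexWeight s (X i * Y j) l u r d = 0 :=
      vertexWeight_eq_zero _ _ _ _ _ _ _ _ _ _ h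
    show (β i * η j)⁻¹ * sixVertexWeight s (X i * Y j) l u r d = 0
    rw [h0, mul_zero]
  have h := latticeSum_gauge hice (fun i => β i / (s ^ 2 - 1)) η α⁻¹
    (fun i => div_ne_zero (hβ i) hs) hη (inv_ne_zero hα)
  rw [latticeSum_mul] at h
  have hω : (fun i j => vertexWeight ((s ^ 2 * (X i * Y j) - 1) / (β i * η j * α))
        ((s ^ 2 * (X i * Y j) - 1) * α / (β i * η j)) (s * (X i * Y j - 1) / (β i * η j))
        (s * (X i * Y j - 1) / (β i * η j)) 1
        ((s ^ 2 - 1) ^ 2 * (X i * Y j) / (β i * η j) ^ 2)) = fun i j l u r d =>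
      vertexWeight α⁻¹ α⁻¹⁻¹ 1 1 (β i / (s ^ 2 - 1) * η j) (β i / (s ^ 2 - 1) * η j)⁻¹ l u r d *
        ((β i * η j)⁻¹ * sixVertexWeight s (X i * Y j) l u r d) := by
    funext i j l u r d
    have := hβ i
    have := hη j
    cases l <;> cases u <;> cases r <;> cases d <;> simp [sixVertexWeight, vertexWeight] <;>
      field_simp
  rw [hω, h, ← partitionFunction]
  simp only [Finset.prod_inv_distrib, Finset.prod_mul_distrib, Finset.prod_div_distrib,
    Finset.prod_const, Finset.card_univ, Fintype.card_fin, Finset.prod_pow]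
  have h1 : ∏ i, β i ≠ 0 := Finset.prod_ne_zero_iff.2 fun i _ => hβ i
  have h2 : ∏ i, η i ≠ 0 := Finset.prod_ne_zero_iff.2 fun i _ => hη i
  field_simp
  ring

/-- The spectral parameter corresponding to the boundary parameter `z`. -/
def spectral {K : Type*} [Field K] (s α z : K) : K := (1 - s * z * α) / (s * (s - z * α))

/-- The weight `s * (t - 1)` at the spectral parameter `t` corresponding to `z`. -/
def bScale {K : Type*} [Field K] (s α z : K) : K := (1 - s ^ 2) / (s - z * α)

/-- Row parameters with distinguished first and last entries. -/
def rowParams {K : Type*} (N : ℕ) (u₁ u₂ r : K) (i : Fin N) : K :=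
  if i.val = 0 then u₁ else if i.val + 1 = N then u₂ else r

/-- Column parameters with a distinguished first entry. -/
def colParams {K : Type*} [One K] (N : ℕ) (v : K) (j : Fin N) : K :=
  if j.val = 0 then v else 1

theorem prod_rowParams {K : Type*} [CommRing K] (m : ℕ) (u₁ u₂ r : K) :
    ∏ i, rowParams (m + 2) u₁ u₂ r i = u₁ * u₂ * r ^ m := by
  rw [Fin.prod_univ_succ, Fin.prod_univ_castSucc, Finset.prod_congr rfl fun (i : Fin m) _ =>
    show rowParams (m + 2) u₁ u₂ r i.castSucc.succ = r by
      have := i.isLt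
      simp [rowParams, this.ne]]
  simp [rowParams]
  ring

theorem prod_colParams {K : Type*} [CommRing K] (m : ℕ) (v : K) :
    ∏ i, colParams (m + 1) v i = v := by
  simp [colParams]

theorem a_spectral {K : Type*} [Field K] {s α z : K} (hz : s - z * α ≠ 0) :
    s ^ 2 * spectral s α z - 1 = z * α * bScale s α z := by
  rw [spectral, bScale]
  field_simp
  ring

theorem b_spectral {K : Type*} [Field K] {s α z : K} (hs : s ≠ 0) (hz : s - z * α ≠ 0) :
    s * (spectral s α z - 1) = bScale s α z := by
  rw [spectral, bScale]
  field_simp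
  ring

theorem partitionFunction_rowParams_colParams {K : Type*} [Field K] (m : ℕ)
    {s α y u₁ u₂ r v z1 z2 z3 b₁ b₂ b₀ δ k1 k2 : K} (hs : s ^ 2 - 1 ≠ 0) (hα : α ≠ 0)
    (hb₁ : b₁ ≠ 0) (hb₂ : b₂ ≠ 0) (hb₀ : b₀ ≠ 0) (hδ : δ ≠ 0)
    (ha1 : s ^ 2 * u₁ - 1 = z1 * α * b₁) (hb1 : s * (u₁ - 1) = b₁)
    (ha2 : s ^ 2 * u₂ - 1 = z2 * α * b₂) (hb2 : s * (u₂ - 1) = b₂)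
    (ha0 : s ^ 2 * r - 1 = α * b₀) (hb0 : s * (r - 1) = b₀)
    (ha3 : s ^ 2 * (r * v) - 1 = z3 * α * (b₀ * δ)) (hb3 : s * (r * v - 1) = b₀ * δ)
    (hy : (s ^ 2 - 1) ^ 2 * r = y * b₀ ^ 2)
    (hk1 : s ^ 2 * (u₁ * v) - 1 = k1 * (b₁ * δ * α * z1 * z3))
    (hk2 : s * (u₂ * v - 1) = k2 * (b₂ * δ)) :
    partitionFunction s (rowParams (m + 2) u₁ u₂ r) (colParams (m + 2) v) =
      (s ^ 2 - 1) ^ (m + 2) * (b₁ * b₂ * b₀ ^ m * δ) ^ (m + 1) *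
        triSum (m + 2) (α ^ 2) y z1 z2 z3 k1 k2 := by
  rw [partitionFunction_eq_normalized s α _ _ (rowParams (m + 2) b₁ b₂ b₀) (colParams (m + 2) δ) hs
    hα, prod_rowParams, prod_colParams, triSum]
  · congr 1
    refine latticeSum_congr fun i j l u r d ht hl hb hr => ?_
    by_cases hi : i.val = 0
    · have hi' : ¬ (0 + 1 = m + 2) := by omega
      by_cases hj : j.val = 0
      · cases l <;> cases u <;> cases r <;> cases d <;>
          simp [hi, hj, rowParams, colParams, triWeight, vertexWeight] at ht hl hb hr ⊢
        all_goals first | (rw [hk1]; field_simp)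
      · cases l <;> cases u <;> cases r <;> cases d <;>
          simp [hi, hj, rowParams, colParams, triWeight, vertexWeight] at ht hl hb hr ⊢
        all_goals first | (rw [ha1]; field_simp) | (rw [hb1]; field_simp)
    · by_cases hi' : i.val + 1 = m + 2
      · by_cases hj : j.val = 0
        · cases l <;> cases u <;> cases r <;> cases d <;>
            simp [hi, hi', hj, rowParams, colParams, triWeight, vertexWeight] at ht hl hb hr ⊢
          all_goals first | (rw [hk2]; field_simp)
        · cases l <;> cases u <;> cases r <;> cases d <;>
            simp [hi, hi', hj, rowParams, colParams, triWeight, vertexWeight] at ht hl hb hr ⊢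
          all_goals first | (rw [ha2]; field_simp) | (rw [hb2]; field_simp)
      · have hi'' : ¬ i.val = m + 1 := by omega
        by_cases hj : j.val = 0
        · cases l <;> cases u <;> cases r <;> cases d <;>
            simp [hi, hi'', hj, rowParams, colParams, triWeight, vertexWeight] at ht hl hb hr ⊢
          all_goals first | (rw [ha3]; field_simp) | (rw [hb3]; field_simp)
        · cases l <;> cases u <;> cases r <;> cases d <;>
            simp [hi, hi'', hj, rowParams, colParams, triWeight, vertexWeight] at ht hl hb hr ⊢
          all_goals first | (rw [ha0]; field_simp) | (rw [hb0]; field_simp) | (rw [hy]; field_simp)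
  · intro i
    unfold rowParams
    split_ifs <;> assumption
  · intro i
    unfold colParams
    split_ifs <;> simp [hδ]

/-- The corner coefficient produced by the north-west vertex. -/
def topCoeff {K : Type*} [Field K] (y z1 z3 : K) : K := 1 - (z1 - 1) * (z3 - 1) / (y * z1 * z3)

/-- The corner coefficient produced by the south-west vertex. -/
def bottomCoeff {K : Type*} [Field K] (x y z2 z3 : K) : K := 1 - x * (z2 - 1) * (z3 - 1) / y

theorem partitionFunction_spectral {K : Type*} [Field K] (m : ℕ) {s α z1 z2 z3 : K} (hs : s ≠ 0)
    (hα : α ≠ 0) (hs1 : 1 - s ^ 2 ≠ 0) (hsα : s - α ≠ 0) (h1α : 1 - s * α ≠ 0)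
    (h1 : s - z1 * α ≠ 0) (h2 : s - z2 * α ≠ 0) (h3 : s - z3 * α ≠ 0) (hz1 : z1 ≠ 0)
    (hz3 : z3 ≠ 0) :
    partitionFunction s (rowParams (m + 2) (spectral s α z1) (spectral s α z2) (spectral s α 1))
        (colParams (m + 2) (spectral s α z3 / spectral s α 1)) =
      (s ^ 2 - 1) ^ (m + 2) * (bScale s α z1 * bScale s α z2 * bScale s α 1 ^ m *
        (bScale s α z3 / bScale s α 1)) ^ (m + 1) *
        triSum (m + 2) (α ^ 2) ((s - α) * (1 - s * α) / s) z1 z2 z3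
          (topCoeff ((s - α) * (1 - s * α) / s) z1 z3)
          (bottomCoeff (α ^ 2) ((s - α) * (1 - s * α) / s) z2 z3) := by
  have hs1' : s ^ 2 - 1 ≠ 0 := fun h => hs1 (by linear_combination -h)
  have hsα' : s - 1 * α ≠ 0 := by rwa [one_mul]
  have h3' : s - α * z3 ≠ 0 := by rwa [mul_comm α]
  have hb : ∀ z, s - z * α ≠ 0 → bScale s α z ≠ 0 := fun z hz => div_ne_zero hs1 hz
  have hr : spectral s α 1 ≠ 0 := by
    rw [spectral, one_mul, mul_one]
    exact div_ne_zero h1α (mul_ne_zero hs hsα)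
  have hrv : spectral s α 1 * (spectral s α z3 / spectral s α 1) = spectral s α z3 :=
    mul_div_cancel₀ _ hr
  have hbδ : bScale s α 1 * (bScale s α z3 / bScale s α 1) = bScale s α z3 :=
    mul_div_cancel₀ _ (hb 1 hsα')
  refine partitionFunction_rowParams_colParams m hs1' hα (hb _ h1) (hb _ h2) (hb _ hsα')
    (div_ne_zero (hb _ h3) (hb _ hsα')) (a_spectral h1) (b_spectral hs h1) (a_spectral h2)
    (b_spectral hs h2) ?_ (b_spectral hs hsα') ?_ ?_ ?_ ?_ ?_
  · rw [a_spectral hsα', one_mul]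
  · rw [hrv, hbδ, a_spectral h3]
  · rw [hrv, hbδ, b_spectral hs h3]
  · simp only [spectral, bScale, one_mul, mul_one]
    field_simp
    ring
  · simp only [spectral, bScale, topCoeff, one_mul, mul_one]
    field_simp
    ring
  · simp only [spectral, bScale, bottomCoeff, one_mul, mul_one]
    field_simp
    ring

theorem partitionFunction_const {K : Type*} [Field K] (k : ℕ) {s α : K} (hs : s ≠ 0)
    (hα : α ≠ 0) (hs1 : 1 - s ^ 2 ≠ 0) (hsα : s - α ≠ 0) :
    partitionFunction s (fun _ : Fin (k + 1) => spectral s α 1) (fun _ => 1) =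
      (s ^ 2 - 1) ^ (k + 1) * (bScale s α 1 ^ (k + 1)) ^ k *
        Zqua (k + 1) (α ^ 2) ((s - α) * (1 - s * α) / s) 1 1 1 1 := by
  have hs1' : s ^ 2 - 1 ≠ 0 := fun h => hs1 (by linear_combination -h)
  have hsα' : s - 1 * α ≠ 0 := by rwa [one_mul]
  have hb : bScale s α 1 ≠ 0 := div_ne_zero hs1 hsα'
  rw [partitionFunction_eq_normalized s α _ _ (fun _ => bScale s α 1) (fun _ => 1) hs1' hα
    (fun _ => hb) (by simp), Zqua_eq_latticeSum]
  congr 1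
  · simp
  · congr 1
    funext i j
    simp only [quaWeight, mul_one, a_spectral hsα', b_spectral hs hsα', ite_self]
    congr 1
    · field_simp
    · field_simp
    · field_simp
    · field_simp
    · simp only [spectral, bScale, one_mul, mul_one]
      field_simp
      ring

theorem cons_cons_const_comp_swap {K : Type*} (k : ℕ) (u₁ u₂ r : K) :
    (Fin.cons u₁ (Fin.cons u₂ fun _ : Fin (k + 1) => r : Fin (k + 2) → K) : Fin (k + 3) → K) ∘
      Equiv.swap 1 (Fin.last (k + 2)) = rowParams (k + 3) u₁ u₂ r := by
  funext i
  have hl : Fin.last (k + 2) = (Fin.last k).succ.succ := rfl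
  by_cases h0 : i = 0
  · subst h0
    rw [Function.comp_apply, Equiv.swap_apply_of_ne_of_ne (by simp) (by simp)]
    simp [rowParams]
  · by_cases hL : i = Fin.last (k + 2)
    · subst hL
      rw [Function.comp_apply, Equiv.swap_apply_right]
      simp [rowParams]
    · have h0' : ¬ i.val = 0 := fun h => h0 (Fin.ext h)
      have hL' : ¬ i.val + 1 = k + 3 := fun h => hL (Fin.ext (by simp; omega))
      rw [Function.comp_apply, rowParams, if_neg h0', if_neg hL']
      by_cases h1 : i = 1
      · rw [h1, Equiv.swap_apply_left, hl]
        rfl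
      · rw [Equiv.swap_apply_of_ne_of_ne h1 hL]
        obtain ⟨j, rfl⟩ := Fin.exists_succ_eq.2 h0
        have hj : j ≠ 0 := fun h => h1 (by rw [h]; rfl)
        obtain ⟨l, rfl⟩ := Fin.exists_succ_eq.2 hj
        rfl

theorem cons_const_eq_rowParams {K : Type*} (k : ℕ) (u r : K) :
    (Fin.cons u fun _ : Fin (k + 1) => r : Fin (k + 2) → K) = rowParams (k + 2) u r r := by
  funext i
  refine Fin.cases ?_ (fun j => ?_) i <;> simp [rowParams]

theorem cons_const_comp_rev {K : Type*} (k : ℕ) (u r : K) :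
    (Fin.cons u fun _ : Fin (k + 1) => r : Fin (k + 2) → K) ∘ Fin.revPerm =
      rowParams (k + 2) r u r := by
  funext i
  refine Fin.lastCases ?_ (fun j => ?_) i
  · simp [rowParams]
  · have := j.isLt
    have h : ¬ j.val = k + 1 := by omega
    simp [rowParams, Fin.rev_castSucc, h]

theorem cons_const_one {K : Type*} [One K] (k : ℕ) (v : K) :
    (Fin.cons v fun _ : Fin k => 1 : Fin (k + 1) → K) = colParams (k + 1) v := by
  funext i
  refine Fin.cases ?_ (fun j => ?_) i <;> simp [colParams]

theorem cons_one_const_one {K : Type*} [One K] (k : ℕ) :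
    (Fin.cons 1 fun _ : Fin k => 1 : Fin (k + 1) → K) = fun _ => 1 := by
  funext i
  refine Fin.cases ?_ (fun j => ?_) i <;> simp

theorem triSum_top {K : Type*} [Field K] (k : ℕ) {x y z1 z3 : K} :
    triSum (k + 2) x y z1 1 z3 (topCoeff y z1 z3) (bottomCoeff x y 1 z3) =
      topCoeff y z1 z3 * Zadj (k + 2) x y z1 z3 + (1 - topCoeff y z1 z3) * Zun (k + 1) x y := by
  rw [triSum_eq, Zadj, Zun, bottomCoeff]
  ring

theorem triSum_bottom {K : Type*} [Field K] (k : ℕ) {x y z2 z3 : K} (hx : x ≠ 0) :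
    triSum (k + 2) x y 1 z2 z3 (topCoeff y 1 z3) (bottomCoeff x y z2 z3) =
      bottomCoeff x y z2 z3 * Zbaradj (k + 2) x y z2 z3 +
        (1 - bottomCoeff x y z2 z3) * (x * z2 * z3) ^ (k + 1) * Zun (k + 1) x y := by
  rw [triSum_eq, Zbaradj, Zun, topCoeff, Zqua_rotate _ _ _ 1 1 z2 z3 hx]
  ring

theorem triSum_top_single {K : Type*} [Field K] (k : ℕ) {x y z1 : K} :
    triSum (k + 2) x y z1 1 1 (topCoeff y z1 1) (bottomCoeff x y 1 1) = Zsing (k + 2) x y z1 := by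
  rw [triSum_top, Zsing, Zadj, topCoeff]
  ring

theorem triSum_bottom_single {K : Type*} [Field K] (k : ℕ) {x y z2 : K} (hx : x ≠ 0) :
    triSum (k + 2) x y 1 z2 1 (topCoeff y 1 1) (bottomCoeff x y z2 1) = Zsing (k + 2) x y z2 := by
  rw [triSum_bottom k hx, Zsing, Zbaradj, bottomCoeff]
  ring

/-- The common factor of the coefficients in `desnanotJacobi_triSum`. -/
def jacobiFactor {K : Type*} [Field K] (s α z1 z2 z3 : K) : K :=
  -(s * α ^ 2 * (1 - s ^ 2) ^ 2) / ((s - z1 * α) * (s - z2 * α) * (s - z3 * α) * (1 - s * α))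

theorem spectral_sub_mul_sub {K : Type*} [Field K] {s α z1 z2 z3 : K} (hs : s ≠ 0)
    (h1α : 1 - s * α ≠ 0) (h1 : s - z1 * α ≠ 0)
    (h2 : s - z2 * α ≠ 0) (h3 : s - z3 * α ≠ 0) :
    s ^ 2 * (spectral s α z2 - spectral s α z1) * (1 - spectral s α z3 / spectral s α 1) =
      jacobiFactor s α z1 z2 z3 * ((z2 - z1) * (z3 - 1)) := by
  have h1' : s - α * z1 ≠ 0 := by rwa [mul_comm α]
  have h2' : s - α * z2 ≠ 0 := by rwa [mul_comm α]
  have h3' : s - α * z3 ≠ 0 := by rwa [mul_comm α]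
  simp only [spectral, jacobiFactor, one_mul, mul_one]
  field_simp
  ring

theorem abWeight_mul_abWeight_top {K : Type*} [Field K] {s α z1 z2 z3 : K} (hs : s ≠ 0)
    (hsα : s - α ≠ 0) (h1α : 1 - s * α ≠ 0) (h1 : s - z1 * α ≠ 0)
    (h2 : s - z2 * α ≠ 0) (h3 : s - z3 * α ≠ 0) {x y : K} (hx : x = α ^ 2)
    (hy : y = (s - α) * (1 - s * α) / s) :
    abWeight s (spectral s α z1 * 1) *
        abWeight s (spectral s α z2 * (spectral s α z3 / spectral s α 1)) =
      bScale s α z1 * bScale s α z2 * (bScale s α z3 / bScale s α 1) *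
        (jacobiFactor s α z1 z2 z3 *
          (z1 * bottomCoeff x y z2 z3 * ((z2 - 1) * (z3 - 1) - y * z2 * z3))) := by
  have h1' : s - α * z1 ≠ 0 := by rwa [mul_comm α]
  have h2' : s - α * z2 ≠ 0 := by rwa [mul_comm α]
  have h3' : s - α * z3 ≠ 0 := by rwa [mul_comm α]
  subst hx hy
  simp only [spectral, jacobiFactor, bScale, bottomCoeff, abWeight, one_mul, mul_one]
  field_simp
  ring

theorem abWeight_mul_abWeight_bottom {K : Type*} [Field K] {s α z1 z2 z3 : K} (hs : s ≠ 0)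
    (hsα : s - α ≠ 0) (h1α : 1 - s * α ≠ 0) (h1 : s - z1 * α ≠ 0)
    (h2 : s - z2 * α ≠ 0) (h3 : s - z3 * α ≠ 0)
    (hz1 : z1 ≠ 0) (hz3 : z3 ≠ 0) {x y : K} (hx : x = α ^ 2)
    (hy : y = (s - α) * (1 - s * α) / s) :
    abWeight s (spectral s α z1 * (spectral s α z3 / spectral s α 1)) *
        abWeight s (spectral s α z2 * 1) =
      bScale s α z1 * bScale s α z2 * (bScale s α z3 / bScale s α 1) *
        (jacobiFactor s α z1 z2 z3 *
          (topCoeff y z1 z3 * z1 * z2 * z3 * (x * (z1 - 1) * (z3 - 1) - y))) := by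
  have h1' : s - α * z1 ≠ 0 := by rwa [mul_comm α]
  have h2' : s - α * z2 ≠ 0 := by rwa [mul_comm α]
  have h3' : s - α * z3 ≠ 0 := by rwa [mul_comm α]
  subst hx hy
  simp only [spectral, jacobiFactor, bScale, topCoeff, abWeight, one_mul, mul_one]
  field_simp
  ring

theorem desnanotJacobi_triSum {K : Type*} [Field K] (k : ℕ) {s α z1 z2 z3 : K} (hs : s ≠ 0)
    (hα : α ≠ 0) (hs1 : 1 - s ^ 2 ≠ 0) (hsα : s - α ≠ 0) (h1α : 1 - s * α ≠ 0)
    (h1 : s - z1 * α ≠ 0) (h2 : s - z2 * α ≠ 0) (h3 : s - z3 * α ≠ 0) (hz1 : z1 ≠ 0)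
    (hz3 : z3 ≠ 0) {x y : K} (hx : x = α ^ 2) (hy : y = (s - α) * (1 - s * α) / s) :
    (z2 - z1) * (z3 - 1) *
        triSum (k + 3) x y z1 z2 z3 (topCoeff y z1 z3) (bottomCoeff x y z2 z3) * Zun (k + 1) x y =
      z1 * bottomCoeff x y z2 z3 * ((z2 - 1) * (z3 - 1) - y * z2 * z3) *
          triSum (k + 2) x y z1 1 z3 (topCoeff y z1 z3) (bottomCoeff x y 1 z3) *
          Zsing (k + 2) x y z2 -
        topCoeff y z1 z3 * z1 * z2 * z3 * (x * (z1 - 1) * (z3 - 1) - y) * Zsing (k + 2) x y z1 *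
          triSum (k + 2) x y 1 z2 z3 (topCoeff y 1 z3) (bottomCoeff x y z2 z3) := by
  have hx0 : α ^ 2 ≠ 0 := pow_ne_zero _ hα
  have hs1' : s ^ 2 - 1 ≠ 0 := fun h => hs1 (by linear_combination -h)
  have hsα' : s - 1 * α ≠ 0 := by rwa [one_mul]
  have hr : spectral s α 1 ≠ 0 := by
    rw [spectral, one_mul, mul_one]
    exact div_ne_zero h1α (mul_ne_zero hs hsα)
  have hb : ∀ z, s - z * α ≠ 0 → bScale s α z ≠ 0 := fun z hz => div_ne_zero hs1 hz
  have hb0 := hb 1 hsα'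
  have hδ : bScale s α z3 / bScale s α 1 ≠ 0 := div_ne_zero (hb _ h3) hb0
  have P := partitionFunction_spectral (k + 1) hs hα hs1 hsα h1α h1 h2 h3 hz1 hz3
  have P13 := partitionFunction_spectral k hs hα hs1 hsα h1α h1 hsα' h3 hz1 hz3
  have P23 := partitionFunction_spectral k hs hα hs1 hsα h1α hsα' h2 h3 one_ne_zero hz3
  have P1 := partitionFunction_spectral k hs hα hs1 hsα h1α h1 hsα' hsα' hz1 one_ne_zero
  have P2 := partitionFunction_spectral k hs hα hs1 hsα h1α hsα' h2 hsα' one_ne_zero one_ne_zero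
  have P0 := partitionFunction_const k hs hα hs1 hsα
  rw [← hx, ← hy] at P P13 P23 P1 P2 P0
  rw [← hx] at hx0
  rw [div_self hr, div_self hb0] at P1 P2
  rw [triSum_top_single] at P1
  rw [triSum_bottom_single k hx0] at P2
  have key := partitionFunction_desnanotJacobi s (spectral s α z1) (spectral s α z2)
    (spectral s α z3 / spectral s α 1) 1 (fun _ : Fin (k + 1) => spectral s α 1) (fun _ => 1)
  rw [cons_one_const_one] at key
  rw [← partitionFunction_comp_perm_left s (Fin.cons (spectral s α z1) _) _
      (Equiv.swap 1 (Fin.last (k + 2))), cons_cons_const_comp_swap, cons_const_one (k + 1 + 1),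
    ← partitionFunction_comp_perm_left s (Fin.cons (spectral s α z2) _) _ Fin.revPerm,
    ← partitionFunction_comp_perm_left s (Fin.cons (spectral s α z2) _) _ Fin.revPerm,
    cons_const_comp_rev, cons_const_eq_rowParams, cons_const_one,
    ← cons_one_const_one (k + 1), cons_const_one (k + 1) 1] at key
  rw [P, P13, P23, P1, P2, P0, spectral_sub_mul_sub hs h1α h1 h2 h3,
    abWeight_mul_abWeight_top hs hsα h1α h1 h2 h3 hx hy,
    abWeight_mul_abWeight_bottom hs hsα h1α h1 h2 h3 hz1 hz3 hx hy] at key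
  have he : jacobiFactor s α z1 z2 z3 ≠ 0 := by
    have := mul_ne_zero (mul_ne_zero h1 h2) (mul_ne_zero h3 h1α)
    unfold jacobiFactor
    exact div_ne_zero (neg_ne_zero.2 (by simp [hs, hα, hs1])) (by simpa [mul_assoc] using this)
  have hb1 := hb _ h1
  have hb2 := hb _ h2
  generalize bScale s α z3 / bScale s α 1 = δ at *
  generalize bScale s α 1 = b₀ at *
  generalize bScale s α z1 = b₁ at *
  generalize bScale s α z2 = b₂ at *
  have hD : jacobiFactor s α z1 z2 z3 * ((s ^ 2 - 1) ^ (2 * k + 4) * (b₁ * b₂ * δ) ^ (k + 2) *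
      (b₀ ^ (k + 1)) ^ (2 * k + 2)) ≠ 0 :=
    mul_ne_zero he (mul_ne_zero (mul_ne_zero (pow_ne_zero _ hs1')
      (pow_ne_zero _ (mul_ne_zero (mul_ne_zero hb1 hb2) hδ)))
      (pow_ne_zero _ (pow_ne_zero _ hb0)))
  refine mul_left_cancel₀ hD ?_
  rw [Zun]
  linear_combination key

/-- The difference of the two sides of the identity for the triply-refined generating function. -/
noncomputable def triDefect {R : Type*} [CommRing R] (k : ℕ) (x y z1 z2 z3 : R) : R :=
  (z2 - z1) * (z3 - 1) * Ztri (k + 3) x y z1 z2 z3 * Zun (k + 1) x y -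
    (((z2 - 1) * (z3 - 1) - y * z2 * z3) * z1 * Zadj (k + 2) x y z1 z3 * Zsing (k + 2) x y z2
      - (x * (z1 - 1) * (z3 - 1) - y) * z1 * z2 * z3 *
          Zbaradj (k + 2) x y z2 z3 * Zsing (k + 2) x y z1
      - (z1 - 1) * (z3 - 1) * z2 * Zsing (k + 2) x y z2 * Zun (k + 1) x y
      + (z2 - 1) * (z3 - 1) * z1 * (x * z2 * z3) ^ (k + 2) *
          Zsing (k + 2) x y z1 * Zun (k + 1) x y)

theorem map_triDefect {R S : Type*} [CommRing R] [CommRing S] (φ : R →+* S) (k : ℕ)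
    (x y z1 z2 z3 : R) :
    φ (triDefect k x y z1 z2 z3) = triDefect k (φ x) (φ y) (φ z1) (φ z2) (φ z3) := by
  simp only [triDefect, Ztri, Zun, Zadj, Zsing, Zbaradj, map_sub, map_add, map_mul, map_pow,
    map_one, Zqua_map]

theorem triDefect_eq_zero_of_param {K : Type*} [Field K] (k : ℕ) {s α x y z1 z2 z3 : K}
    (hs : s ≠ 0) (hα : α ≠ 0) (hs1 : 1 - s ^ 2 ≠ 0) (hsα : s - α ≠ 0) (h1α : 1 - s * α ≠ 0)
    (h1 : s - z1 * α ≠ 0) (h2 : s - z2 * α ≠ 0) (h3 : s - z3 * α ≠ 0) (hz1 : z1 ≠ 0)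
    (hz3 : z3 ≠ 0) (hx : x = α ^ 2) (hy : y = (s - α) * (1 - s * α) / s)
    (hk1 : y * z1 * z3 - (z1 - 1) * (z3 - 1) ≠ 0) (hk2 : y - x * (z2 - 1) * (z3 - 1) ≠ 0) :
    triDefect k x y z1 z2 z3 = 0 := by
  have hx0 : x ≠ 0 := hx ▸ pow_ne_zero _ hα
  have hy0 : y ≠ 0 := hy ▸ div_ne_zero (mul_ne_zero hsα h1α) hs
  have key := desnanotJacobi_triSum k hs hα hs1 hsα h1α h1 h2 h3 hz1 hz3 hx hy
  rw [triSum_top, triSum_bottom k hx0, triSum_eq, Zqua_rotate _ _ _ 1 1 z2 1 hx0] at key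
  have e1 : topCoeff y z1 z3 * (y * z1 * z3) = y * z1 * z3 - (z1 - 1) * (z3 - 1) := by
    rw [topCoeff]
    field_simp
  have e2 : bottomCoeff x y z2 z3 * y = y - x * (z2 - 1) * (z3 - 1) := by
    rw [bottomCoeff]
    field_simp
  have n1 : topCoeff y z1 z3 ≠ 0 := fun h => hk1 (by rw [← e1, h, zero_mul])
  have n2 : bottomCoeff x y z2 z3 ≠ 0 := fun h => hk2 (by rw [← e2, h, zero_mul])
  refine (mul_eq_zero.1 ?_).resolve_left (mul_ne_zero n1 n2)
  rw [triDefect, Ztri]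
  simp only [Zsing, Zun, Zadj, Zbaradj] at key ⊢
  generalize topCoeff y z1 z3 = κ₁ at *
  generalize bottomCoeff x y z2 z3 = κ₂ at *
  linear_combination key + κ₂ * z2 * Zqua (k + 2) x y z2 1 1 1 * Zqua (k + 1) x y 1 1 1 1 * e1 -
    κ₁ * z1 * z2 * z3 * (x * z2 * z3) ^ (k + 1) * Zqua (k + 2) x y z1 1 1 1 *
      Zqua (k + 1) x y 1 1 1 1 * e2

/-- A polynomial which does not vanish on the parametrised part of the parameter space. -/
def genericFactor {R : Type*} [CommRing R] (x y z1 z2 z3 : R) : R :=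
  x * y * z1 * z3 * ((x + 1 - y) ^ 2 - 4 * x) * (z1 ^ 2 * x + 1 - z1 * (x + 1 - y)) *
    (z2 ^ 2 * x + 1 - z2 * (x + 1 - y)) * (z3 ^ 2 * x + 1 - z3 * (x + 1 - y)) *
    (y * z1 * z3 - (z1 - 1) * (z3 - 1)) * (y - x * (z2 - 1) * (z3 - 1))

theorem map_genericFactor {R S : Type*} [CommRing R] [CommRing S] (φ : R →+* S)
    (x y z1 z2 z3 : R) :
    φ (genericFactor x y z1 z2 z3) = genericFactor (φ x) (φ y) (φ z1) (φ z2) (φ z3) := by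
  simp only [genericFactor, map_sub, map_add, map_mul, map_pow, map_one, map_ofNat]

theorem triDefect_eq_zero_of_generic {K : Type*} [Field K] [IsAlgClosed K] (k : ℕ)
    {x y z1 z2 z3 : K} (h : genericFactor x y z1 z2 z3 ≠ 0) : triDefect k x y z1 z2 z3 = 0 := by
  simp only [genericFactor, mul_ne_zero_iff] at h
  obtain ⟨⟨⟨⟨⟨⟨⟨⟨⟨hx, hy⟩, hz1⟩, hz3⟩, hd⟩, h1⟩, h2⟩, h3⟩, hk1⟩, hk2⟩ := h
  obtain ⟨α, rfl⟩ := IsAlgClosed.exists_pow_nat_eq x (n := 2) (by norm_num)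
  have hα : α ≠ 0 := fun h => hx (by simp [h])
  obtain ⟨s, hs⟩ : ∃ s : K, α * s ^ 2 - (α ^ 2 + 1 - y) * s + α = 0 := by
    obtain ⟨s, hs⟩ := IsAlgClosed.exists_root
      (Polynomial.C α * Polynomial.X ^ 2 + Polynomial.C (-(α ^ 2 + 1 - y)) * Polynomial.X +
        Polynomial.C α) (by rw [Polynomial.degree_quadratic hα]; decide)
    refine ⟨s, ?_⟩
    rw [Polynomial.IsRoot] at hs
    simp only [Polynomial.eval_add, Polynomial.eval_mul, Polynomial.eval_C, Polynomial.eval_pow,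
      Polynomial.eval_X] at hs
    linear_combination hs
  have hs0 : s ≠ 0 := by
    rintro rfl
    exact hα (by linear_combination hs)
  have hy' : y * s = (s - α) * (1 - s * α) := by linear_combination hs
  have hz : ∀ z : K, z ^ 2 * α ^ 2 + 1 - z * (α ^ 2 + 1 - y) ≠ 0 → s - z * α ≠ 0 := by
    intro z hz h0
    have hs' : s = z * α := by linear_combination h0
    subst hs'
    exact hz ((mul_eq_zero.1 (by linear_combination hs :
      α * (z ^ 2 * α ^ 2 + 1 - z * (α ^ 2 + 1 - y)) = 0)).resolve_left hα)
  refine triDefect_eq_zero_of_param k hs0 hα ?_ ?_ ?_ (hz _ h1) (hz _ h2) (hz _ h3) hz1 hz3 rfl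
    ((eq_div_iff hs0).2 hy') hk1 hk2
  · intro h0
    refine hd ?_
    have e : (α ^ 2 + 1 - y) * s = 2 * α := by linear_combination -hs - α * h0
    linear_combination ((α ^ 2 + 1 - y) * s + 2 * α) * e + (α ^ 2 + 1 - y) ^ 2 * h0
  · intro h0
    exact (mul_ne_zero hy hs0) (by rw [hy', h0, zero_mul])
  · intro h0
    exact (mul_ne_zero hy hs0) (by rw [hy', h0, mul_zero])

theorem triDefect_eq_zero {R : Type*} [CommRing R] (k : ℕ) (x y z1 z2 z3 : R) :
    triDefect k x y z1 z2 z3 = 0 := by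
  let X : Fin 5 → MvPolynomial (Fin 5) ℤ := MvPolynomial.X
  have hG : genericFactor (X 0) (X 1) (X 2) (X 3) (X 4) ≠ 0 := by
    intro h
    have h' := congrArg (MvPolynomial.eval ![(2 : ℤ), 1, 1, 1, 1]) h
    rw [map_genericFactor] at h'
    simp [X, genericFactor] at h'
  have hF : triDefect k (X 0) (X 1) (X 2) (X 3) (X 4) = 0 := by
    refine (mul_eq_zero.1 ?_).resolve_left hG
    refine MvPolynomial.map_injective (Int.castRingHom ℂ) Int.cast_injective
      (MvPolynomial.funext fun p => ?_)
    rw [map_mul, map_mul, map_genericFactor, map_genericFactor, map_triDefect, map_triDefect,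
      map_zero, map_zero, mul_eq_zero]
    exact or_iff_not_imp_left.2 fun h => triDefect_eq_zero_of_generic k h
  have h := map_triDefect (MvPolynomial.eval₂Hom (Int.castRingHom R) ![x, y, z1, z2, z3]) k
    (X 0) (X 1) (X 2) (X 3) (X 4)
  rw [hF, map_zero] at h
  have hX : ∀ i, MvPolynomial.eval₂Hom (Int.castRingHom R) ![x, y, z1, z2, z3] (X i) =
      ![x, y, z1, z2, z3] i := fun i => MvPolynomial.eval₂Hom_X' _ _ _
  simp only [hX] at h
  exact h.symm

/-- Identity for the triply-refined ASM generating function, stated for all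
values of the variables in any commutative ring, equivalently as an identity of
polynomials in `ℤ[x,y,z1,z2,z3]`. -/
theorem stmt1 {R : Type*} [CommRing R] (x y z1 z2 z3 : R) (n : ℕ) (hn : 3 ≤ n) :
    (z2 - z1) * (z3 - 1) * Ztri n x y z1 z2 z3 * Zun (n - 2) x y =
      ((z2 - 1) * (z3 - 1) - y * z2 * z3) * z1 *
          Zadj (n - 1) x y z1 z3 * Zsing (n - 1) x y z2
      - (x * (z1 - 1) * (z3 - 1) - y) * z1 * z2 * z3 *
          Zbaradj (n - 1) x y z2 z3 * Zsing (n - 1) x y z1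
      - (z1 - 1) * (z3 - 1) * z2 * Zsing (n - 1) x y z2 * Zun (n - 2) x y
      + (z2 - 1) * (z3 - 1) * z1 * (x * z2 * z3) ^ (n - 1) *
          Zsing (n - 1) x y z1 * Zun (n - 2) x y := by
  obtain ⟨k, rfl⟩ : ∃ k, n = k + 3 := ⟨n - 3, by omega⟩
  exact sub_eq_zero.1 (triDefect_eq_zero k x y z1 z2 z3)
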